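/- arXiv:2301.11192 — 5 statements merged into one kernel-verified Lean document; each statement's English description precedes it below -/
import Mathlib

section
/- Let p ≥ 5 be a prime with p ≠ 11. If b₂₁((11p^2 − 5)/6) is even, then for every integer k ≥ 0, b₂₁((11p^{6k} − 5)/6) is odd. -/
/-- `b21 n` is the number of 21-regular partitions of `n`,
i.e. partitions of `n` none of whose parts is divisible by 21. -/
def b21 (n : ℕ) : ℕ :=
  (Finset.univ.filter fun c : n.Partition => ∀ i ∈ c.parts, ¬ (21 ∣ i)).card

set_option maxHeartbeats 400000

theorem sq21_thue (p : ℕ) (hp : p.Prime) (t : ℤ) :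
    ∃ x y : ℤ, (x ≠ 0 ∨ y ≠ 0) ∧ x ^ 2 < p ∧ y ^ 2 < p ∧ (p : ℤ) ∣ x - t * y := by
  set r := Nat.sqrt p with hr
  have h1 : p < (r + 1) * (r + 1) := Nat.lt_succ_sqrt p
  have h2 : r * r ≤ p := Nat.sqrt_le p
  have h3 : r * r ≠ p := by
    intro h
    exact hp.prime.not_isSquare ⟨r, h.symm⟩
  have : NeZero p := ⟨hp.ne_zero⟩
  have hcard : (Finset.univ : Finset (ZMod p)).card <
      ((Finset.range (r + 1)) ×ˢ (Finset.range (r + 1))).card := by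
    simp [ZMod.card]
    exact h1
  obtain ⟨a, ha, b, hb, hab, hf⟩ := Finset.exists_ne_map_eq_of_card_lt_of_maps_to hcard
    (f := fun a => ((a.1 : ZMod p) - (t : ZMod p) * (a.2 : ZMod p))) (fun _ _ => by simp)
  simp only [Finset.mem_product, Finset.mem_range] at ha hb
  have key : ∀ a b : ℕ, a < r + 1 → b < r + 1 → ((a : ℤ) - b) ^ 2 < p := by
    intro a b ha hb
    have : ((a : ℤ) - b) ^ 2 ≤ (r : ℤ) ^ 2 := by
      apply sq_le_sq'
      · linarith [(by exact_mod_cast Nat.lt_succ_iff.mp hb : (b : ℤ) ≤ r), (Nat.cast_nonneg a : (0 : ℤ) ≤ a)]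
      · linarith [(by exact_mod_cast Nat.lt_succ_iff.mp ha : (a : ℤ) ≤ r), (Nat.cast_nonneg b : (0 : ℤ) ≤ b)]
    have h4 : r ^ 2 < p := by rw [sq]; exact lt_of_le_of_ne h2 h3
    have : (r : ℤ) ^ 2 < p := by exact_mod_cast h4
    linarith
  refine ⟨a.1 - b.1, a.2 - b.2, ?_, key _ _ ha.1 hb.1, key _ _ ha.2 hb.2, ?_⟩
  · by_contra hcon
    push Not at hcon
    apply hab
    ext <;> omega
  · rw [← ZMod.intCast_zmod_eq_zero_iff_dvd]
    push_cast
    linear_combination hf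

theorem sq21_dvd_of_sq {q : ℤ} (hq : Prime q) {x : ℤ} (h : q ∣ x ^ 2) : q ∣ x := hq.dvd_of_dvd_pow h

theorem sq21_form (p : ℕ) (hp : p.Prime) (t : ℤ) (ht : (p : ℤ) ∣ t ^ 2 + 6) :
    ∃ a b : ℤ, a ^ 2 + 6 * b ^ 2 = p ∨ 2 * a ^ 2 + 3 * b ^ 2 = p := by
  obtain ⟨x, y, hne, hx, hy, hd⟩ := sq21_thue p hp t
  have hdvd : (p : ℤ) ∣ x ^ 2 + 6 * y ^ 2 := by
    have : x ^ 2 + 6 * y ^ 2 = (x - t * y) * (x + t * y) + (t ^ 2 + 6) * y ^ 2 := by ring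
    rw [this]
    exact dvd_add (Dvd.dvd.mul_right hd _) (Dvd.dvd.mul_right ht _)
  obtain ⟨m, hm⟩ := hdvd
  have hp0 : (0 : ℤ) < p := by exact_mod_cast hp.pos
  have hpos : 0 < x ^ 2 + 6 * y ^ 2 := by
    rcases hne with h | h
    · have := sq_pos_of_ne_zero h
      nlinarith [sq_nonneg y]
    · have := sq_pos_of_ne_zero h
      nlinarith [sq_nonneg x]
  have hm1 : 0 < m := by
    by_contra h
    nlinarith
  have hm7 : m < 7 := by
    by_contra h
    nlinarith
  have p2 : Prime (2 : ℤ) := Int.prime_two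
  have p3 : Prime (3 : ℤ) := Int.prime_three
  interval_cases m
  · exact ⟨x, y, Or.inl (by linarith)⟩
  · obtain ⟨a, rfl⟩ := p2.dvd_of_dvd_pow (show (2 : ℤ) ∣ x ^ 2 by omega)
    exact ⟨a, y, Or.inr (by linarith)⟩
  · obtain ⟨a, rfl⟩ := p3.dvd_of_dvd_pow (show (3 : ℤ) ∣ x ^ 2 by omega)
    exact ⟨y, a, Or.inr (by linarith)⟩
  · obtain ⟨a, rfl⟩ := p2.dvd_of_dvd_pow (show (2 : ℤ) ∣ x ^ 2 by omega)
    obtain ⟨b, rfl⟩ := p2.dvd_of_dvd_pow (show (2 : ℤ) ∣ y ^ 2 by ring_nf at hm; omega)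
    exact ⟨a, b, Or.inl (by linarith)⟩
  · have p5 : Prime (5 : ℤ) := by norm_num [Int.prime_iff_natAbs_prime]
    have : (5 : ℤ) ∣ (x - 2 * y) * (x + 2 * y) := ⟨p - 2 * y ^ 2, by linarith⟩
    rcases p5.dvd_or_dvd this with h | h
    · obtain ⟨b, hb⟩ := h
      have hxe : x = 2 * y + 5 * b := by linarith
      subst hxe
      exact ⟨y + b, b, Or.inr (by linarith)⟩
    · obtain ⟨b, hb⟩ := h
      have hxe : x = -2 * y + 5 * b := by linarith
      subst hxe
      exact ⟨-y + b, b, Or.inr (by linarith)⟩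
  · obtain ⟨a, rfl⟩ := p2.dvd_of_dvd_pow (show (2 : ℤ) ∣ x ^ 2 by omega)
    obtain ⟨b, rfl⟩ := p3.dvd_of_dvd_pow (show (3 : ℤ) ∣ a ^ 2 by ring_nf at hm; omega)
    exact ⟨y, b, Or.inl (by linarith)⟩

theorem sq21_uv (p : ℕ) (hp : p.Prime) (hp5 : 5 ≤ p) (x y : ℤ) (h : (p : ℤ) ∣ 3 * x ^ 2 + 8 * y ^ 2)
    (hx : ¬ (p : ℤ) ∣ x) : ∃ u v : ℤ, u ^ 2 + 24 * v ^ 2 = (p : ℤ) ^ 2 ∧ v ≠ 0 := by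
  have hpp : Prime (p : ℤ) := Nat.prime_iff_prime_int.mp hp
  have : Fact p.Prime := ⟨hp⟩
  have hsm : ∀ q : ℕ, q < p → 0 < q → ¬ (p : ℤ) ∣ q := by
    intro q hq h0 hd
    have := Nat.le_of_dvd h0 (by exact_mod_cast hd)
    omega
  have h2 : ((2 : ℤ) : ZMod p) ≠ 0 := by
    rw [Ne, ZMod.intCast_zmod_eq_zero_iff_dvd]
    exact hsm 2 (by omega) (by omega)
  have h3 : ¬ (p : ℤ) ∣ 3 := hsm 3 (by omega) (by omega)
  have hy : ((y : ℤ) : ZMod p) ≠ 0 := by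
    rw [Ne, ZMod.intCast_zmod_eq_zero_iff_dvd]
    intro hy
    have : (p : ℤ) ∣ 3 * x ^ 2 := by
      have h8 : (p : ℤ) ∣ 8 * y ^ 2 := Dvd.dvd.mul_left (dvd_pow hy (by norm_num)) _
      exact (Int.dvd_add_left h8).mp h
    rcases hpp.dvd_or_dvd this with h' | h'
    · exact h3 h'
    · exact hx (hpp.dvd_of_dvd_pow h')
  have hz : (3 * (x : ZMod p) ^ 2 + 8 * (y : ZMod p) ^ 2) = 0 := by
    have := (ZMod.intCast_zmod_eq_zero_iff_dvd (3 * x ^ 2 + 8 * y ^ 2) p).mpr h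
    exact_mod_cast this
  have ht : ∃ t : ℤ, (p : ℤ) ∣ t ^ 2 + 6 := by
    obtain ⟨t, ht⟩ := ZMod.intCast_surjective ((3 * (x : ZMod p)) / (2 * (y : ZMod p)))
    refine ⟨t, ?_⟩
    rw [← ZMod.intCast_zmod_eq_zero_iff_dvd]
    push_cast
    rw [ht]
    have h2' : (2 : ZMod p) ≠ 0 := by exact_mod_cast h2
    field_simp
    linear_combination 3 * hz
  obtain ⟨t, ht⟩ := ht
  have hnz : ∀ c : ℤ, ∀ q : ℕ, 0 < q → q < p → q * c ^ 2 ≠ p := by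
    intro c q hq0 hq h
    have hd : (p : ℤ) ∣ q * c ^ 2 := ⟨1, by linarith⟩
    rcases hpp.dvd_or_dvd hd with h' | h'
    · exact hsm q hq hq0 h'
    · obtain ⟨e, rfl⟩ := hpp.dvd_of_dvd_pow h'
      have h0 : (0 : ℤ) < p := by exact_mod_cast hp.pos
      have : (p : ℤ) * (q * p * e ^ 2 - 1) = 0 := by linear_combination h
      rcases mul_eq_zero.mp this with h1 | h1
      · omega
      · have : (p : ℤ) ∣ 1 := ⟨q * e ^ 2, by linarith⟩
        exact hpp.not_isUnit (isUnit_of_dvd_one this)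
  obtain ⟨a, b, hab | hab⟩ := sq21_form p hp t ht
  · refine ⟨a ^ 2 - 6 * b ^ 2, a * b, by rw [← hab]; ring, ?_⟩
    apply mul_ne_zero
    · rintro rfl
      have hb : (p : ℤ) = 6 * b ^ 2 := by linarith
      have : (2 : ℤ) ∣ p := ⟨3 * b ^ 2, by linarith⟩
      have h2p : 2 ∣ p := by exact_mod_cast this
      have := (Nat.prime_dvd_prime_iff_eq Nat.prime_two hp).mp h2p
      omega
    · rintro rfl
      exact hnz a 1 (by omega) (by omega) (by push_cast; linarith)
  · refine ⟨2 * a ^ 2 - 3 * b ^ 2, a * b, by rw [← hab]; ring, ?_⟩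
    apply mul_ne_zero
    · rintro rfl
      exact hnz b 3 (by omega) (by omega) (by push_cast; linarith)
    · rintro rfl
      exact hnz a 2 (by omega) (by omega) (by push_cast; linarith)

/-- The set of representations `3x²+8y²=N` in natural numbers with `3 ∤ x`. -/
def repSet (N : ℕ) : Finset (ℕ × ℕ) :=
  ((Finset.range (N + 1)) ×ˢ (Finset.range (N + 1))).filter
    (fun a => 3 * a.1 ^ 2 + 8 * a.2 ^ 2 = N ∧ ¬ 3 ∣ a.1)

theorem mem_repSet {N : ℕ} {a : ℕ × ℕ} :
    a ∈ repSet N ↔ 3 * a.1 ^ 2 + 8 * a.2 ^ 2 = N ∧ ¬ 3 ∣ a.1 := by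
  unfold repSet
  simp only [Finset.mem_filter, Finset.mem_product, Finset.mem_range, and_iff_right_iff_imp]
  rintro ⟨h, -⟩
  constructor <;> nlinarith [Nat.zero_le a.1, Nat.zero_le a.2, sq_nonneg a.1, sq_nonneg a.2]

/-- powers of `u+2v√-6` acting on `(1,e)` -/
def seqT (u v e : ℤ) : ℕ → ℤ × ℤ
  | 0 => (1, e)
  | j + 1 => (u * (seqT u v e j).1 - 8 * v * (seqT u v e j).2,
      u * (seqT u v e j).2 + 3 * v * (seqT u v e j).1)

section
variable {p : ℕ} {u v : ℤ}

theorem seqT_norm (huv : u ^ 2 + 24 * v ^ 2 = (p : ℤ) ^ 2) {e : ℤ} (he : e ^ 2 = 1) (j : ℕ) :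
    3 * (seqT u v e j).1 ^ 2 + 8 * (seqT u v e j).2 ^ 2 = 11 * (p : ℤ) ^ (2 * j) := by
  induction j with
  | zero => simp [seqT, he]
  | succ j ih =>
    simp only [seqT]
    rw [show 2 * (j + 1) = 2 * j + 2 by ring, pow_add, ← huv]
    linear_combination (u ^ 2 + 24 * v ^ 2) * ih

theorem seqT_conj (huv : u ^ 2 + 24 * v ^ 2 = (p : ℤ) ^ 2) (e : ℤ) (j : ℕ) :
    u * (seqT u v e (j + 1)).1 + 8 * v * (seqT u v e (j + 1)).2 = (p : ℤ) ^ 2 * (seqT u v e j).1 ∧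
    u * (seqT u v e (j + 1)).2 - 3 * v * (seqT u v e (j + 1)).1 = (p : ℤ) ^ 2 * (seqT u v e j).2 := by
  simp only [seqT]
  rw [← huv]
  constructor <;> ring

theorem not_dvd_small (hp5 : 5 ≤ p) (q : ℕ) (hq : q < p) (h0 : 0 < q) : ¬ (p : ℤ) ∣ q := by
  intro hd
  have := Nat.le_of_dvd h0 (by exact_mod_cast hd)
  omega

theorem uv_not_dvd (hp : p.Prime) (hp5 : 5 ≤ p) (huv : u ^ 2 + 24 * v ^ 2 = (p : ℤ) ^ 2) (hv : v ≠ 0) :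
    ¬ (p : ℤ) ∣ u ∧ ¬ (p : ℤ) ∣ v := by
  have hpp : Prime (p : ℤ) := Nat.prime_iff_prime_int.mp hp
  have h0 : (0 : ℤ) < p := by exact_mod_cast hp.pos
  have hv' : ¬ (p : ℤ) ∣ v := by
    rintro ⟨w, rfl⟩
    have hw : w ≠ 0 := by rintro rfl; simp at hv
    have : 0 < w ^ 2 := sq_pos_of_ne_zero hw
    have h1 : (p : ℤ) ^ 2 * 1 ≤ (p : ℤ) ^ 2 * w ^ 2 := by
      apply mul_le_mul_of_nonneg_left _ (by positivity)
      omega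
    nlinarith [sq_nonneg u, sq_pos_of_ne_zero h0.ne']
  refine ⟨?_, hv'⟩
  rintro ⟨w, rfl⟩
  have : (p : ℤ) ∣ 24 * v ^ 2 := ⟨p - p * w ^ 2, by linear_combination huv⟩
  rcases hpp.dvd_or_dvd this with h | h
  · have h' : p ∣ 2 ^ 3 * 3 := by exact_mod_cast h
    rcases (Nat.Prime.dvd_mul hp).mp h' with h | h
    · have := Nat.le_of_dvd (by norm_num) (hp.dvd_of_dvd_pow h); omega
    · have := Nat.le_of_dvd (by norm_num) h; omega
  · exact hv' (hpp.dvd_of_dvd_pow h)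

theorem not_both (hp : p.Prime) (hp5 : 5 ≤ p) (hu : ¬ (p : ℤ) ∣ u) {x y : ℤ} (hx : ¬ (p : ℤ) ∣ x)
    (h1 : (p : ℤ) ∣ u * x + 8 * v * y) (h2 : (p : ℤ) ∣ u * x - 8 * v * y) : False := by
  have hpp : Prime (p : ℤ) := Nat.prime_iff_prime_int.mp hp
  have h : (p : ℤ) ∣ ((2 : ℕ) : ℤ) * (u * x) := by
    obtain ⟨c, hc⟩ := dvd_add h1 h2
    refine ⟨c, ?_⟩
    push_cast
    linear_combination hc
  rcases hpp.dvd_or_dvd h with h | h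
  · exact not_dvd_small hp5 2 (by omega) (by omega) h
  · rcases hpp.dvd_or_dvd h with h | h
    · exact hu h
    · exact hx h

theorem seqT_prim (hp : p.Prime) (hp5 : 5 ≤ p) (hp11 : p ≠ 11)
    (huv : u ^ 2 + 24 * v ^ 2 = (p : ℤ) ^ 2) (hv : v ≠ 0) {e : ℤ} (he : e ^ 2 = 1) (j : ℕ) :
    ¬ (p : ℤ) ∣ (seqT u v e (j + 1)).1 := by
  have hpp : Prime (p : ℤ) := Nat.prime_iff_prime_int.mp hp
  obtain ⟨hu', hv'⟩ := uv_not_dvd hp hp5 huv hv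
  induction j with
  | zero =>
    simp only [seqT]
    rintro ⟨c, hc⟩
    have : (p : ℤ) ∣ 88 * v ^ 2 := by
      refine ⟨p - c * (u + 8 * v * e), ?_⟩
      have : (u * 1 - 8 * v * e) * (u + 8 * v * e) = (p : ℤ) * c * (u + 8 * v * e) := by rw [hc]
      linear_combination huv - this - 64 * v ^ 2 * he
    rcases hpp.dvd_or_dvd this with h | h
    · have h' : p ∣ 2 ^ 3 * 11 := by exact_mod_cast h
      rcases (Nat.Prime.dvd_mul hp).mp h' with h | h
      · have := Nat.le_of_dvd (by norm_num) (hp.dvd_of_dvd_pow h); omega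
      · exact hp11 ((Nat.prime_dvd_prime_iff_eq hp (by norm_num)).mp h)
    · exact hv' (hpp.dvd_of_dvd_pow h)
  | succ j ih =>
    intro h
    rw [seqT] at h
    refine not_both hp hp5 hu' ih ?_ h
    rw [(seqT_conj huv e j).1]
    exact ⟨p * (seqT u v e j).1, by ring⟩

theorem seqT_mod3 (hp : p.Prime) (hp5 : 5 ≤ p)
    (huv : u ^ 2 + 24 * v ^ 2 = (p : ℤ) ^ 2) (e : ℤ) (j : ℕ) :
    (3 : ℤ) ∣ (seqT u v e j).1 ↔ (3 : ℤ) ∣ u + j * e * v := by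
  have hu : (u : ZMod 3) ≠ 0 := by
    intro h
    rw [ZMod.intCast_zmod_eq_zero_iff_dvd] at h
    have h1 : (3 : ℤ) ∣ (p : ℤ) ^ 2 := by
      rw [← huv]
      exact dvd_add (dvd_pow h (by norm_num)) ⟨8 * v ^ 2, by ring⟩
    have h2 : (3 : ℤ) ∣ p := Int.prime_three.dvd_of_dvd_pow h1
    have h3 : 3 ∣ p := by exact_mod_cast h2
    have := (Nat.prime_dvd_prime_iff_eq Nat.prime_three hp).mp h3
    omega
  have c1 : (3 : ZMod 3) = 0 := by decide
  have key : ∀ j : ℕ, ((seqT u v e j).2 : ZMod 3) = e * u ^ j ∧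
      (u : ZMod 3) * ((seqT u v e j).1 : ZMod 3) = u ^ j * (u + j * e * v) := by
    intro j
    induction j with
    | zero => simp [seqT]
    | succ j ih =>
      obtain ⟨h1, h2⟩ := ih
      simp only [seqT]
      push_cast
      constructor
      · rw [h1, c1]; ring
      · rw [h1]
        linear_combination u * h2 - 3 * u * v * e * u ^ j * c1
  have h := (key j).2
  have e1 : (3 : ℤ) ∣ (seqT u v e j).1 ↔ ((seqT u v e j).1 : ZMod 3) = 0 :=
    (ZMod.intCast_zmod_eq_zero_iff_dvd _ 3).symm
  have e2 : (3 : ℤ) ∣ u + j * e * v ↔ ((u : ZMod 3) + j * e * v) = 0 := by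
    rw [← Int.cast_natCast (R := ZMod 3) j]
    rw [← Int.cast_mul, ← Int.cast_mul, ← Int.cast_add]
    exact (ZMod.intCast_zmod_eq_zero_iff_dvd _ 3).symm
  rw [e1, e2]
  have : Fact (Nat.Prime 3) := ⟨Nat.prime_three⟩
  constructor
  · intro h'
    rw [h', mul_zero] at h
    exact (mul_eq_zero.mp h.symm).resolve_left (pow_ne_zero _ hu)
  · intro h'
    rw [h', mul_zero] at h
    exact (mul_eq_zero.mp h).resolve_left hu

theorem seqT_complete (hp : p.Prime) (hp5 : 5 ≤ p)
    (huv : u ^ 2 + 24 * v ^ 2 = (p : ℤ) ^ 2) (hv : v ≠ 0) (j : ℕ) (x y : ℤ)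
    (hxy : 3 * x ^ 2 + 8 * y ^ 2 = 11 * (p : ℤ) ^ (2 * (j + 1))) (hx : ¬ (p : ℤ) ∣ x)
    (hd : (p : ℤ) ∣ u * x + 8 * v * y) :
    ∃ s e : ℤ, s ^ 2 = 1 ∧ (e = 1 ∨ e = -1) ∧ x = s * (seqT u v e (j + 1)).1 ∧
      y = s * (seqT u v e (j + 1)).2 := by
  have hpp : Prime (p : ℤ) := Nat.prime_iff_prime_int.mp hp
  have hp0 : (p : ℤ) ≠ 0 := hpp.ne_zero
  obtain ⟨hu', hv'⟩ := uv_not_dvd hp hp5 huv hv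
  have hnd : ¬ (p : ℤ) ∣ u * x - 8 * v * y := fun h => not_both hp hp5 hu' hx hd h
  have hprod : (p : ℤ) ^ 2 ∣ (u * x + 8 * v * y) * (u * x - 8 * v * y) := by
    refine ⟨x ^ 2 - 8 * v ^ 2 * (11 * (p : ℤ) ^ (2 * j)), ?_⟩
    have : (p : ℤ) ^ (2 * (j + 1)) = p ^ 2 * p ^ (2 * j) := by ring
    rw [this] at hxy
    linear_combination x ^ 2 * huv - 8 * v ^ 2 * hxy
  have hcop : IsCoprime ((p : ℤ) ^ 2) (u * x - 8 * v * y) :=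
    IsCoprime.pow_left ((Prime.coprime_iff_not_dvd hpp).mpr hnd)
  obtain ⟨A, hA⟩ := hcop.dvd_of_dvd_mul_right hprod
  have hB1 : ((p : ℤ) ^ 2) ^ 2 ∣ (u * y - 3 * v * x) ^ 2 := by
    have h8 : IsCoprime (((p : ℤ) ^ 2) ^ 2) 8 := by
      apply IsCoprime.pow_left
      apply IsCoprime.pow_left
      rw [Prime.coprime_iff_not_dvd hpp]
      intro h
      have h' : (p : ℤ) ∣ (2 : ℕ) := hpp.dvd_of_dvd_pow (n := 3) (by simpa using h)
      exact not_dvd_small hp5 2 (by omega) (by omega) h'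
    apply h8.dvd_of_dvd_mul_left
    refine ⟨11 * (p : ℤ) ^ (2 * j) - 3 * A ^ 2, ?_⟩
    have : (p : ℤ) ^ (2 * (j + 1)) = p ^ 2 * p ^ (2 * j) := by ring
    rw [this] at hxy
    have hA2 : (u * x + 8 * v * y) ^ 2 = ((p : ℤ) ^ 2 * A) ^ 2 := by rw [hA]
    linear_combination (u ^ 2 + 24 * v ^ 2) * hxy - 3 * hA2 + 11 * (p : ℤ) ^ 2 * p ^ (2 * j) * huv
  obtain ⟨B, hB⟩ := (Int.pow_dvd_pow_iff (by norm_num)).mp hB1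
  have hp2 : (p : ℤ) ^ 2 ≠ 0 := pow_ne_zero _ hp0
  have ex : x = u * A - 8 * v * B := by
    apply mul_left_cancel₀ hp2
    linear_combination (-x) * huv + u * hA - 8 * v * hB
  have ey : y = u * B + 3 * v * A := by
    apply mul_left_cancel₀ hp2
    linear_combination (-y) * huv + u * hB + 3 * v * hA
  have hAB : 3 * A ^ 2 + 8 * B ^ 2 = 11 * (p : ℤ) ^ (2 * j) := by
    apply mul_left_cancel₀ hp2
    have : (p : ℤ) ^ (2 * (j + 1)) = p ^ 2 * p ^ (2 * j) := by ring
    rw [this, ex, ey] at hxy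
    linear_combination hxy - (3 * A ^ 2 + 8 * B ^ 2) * huv
  cases j with
  | zero =>
    simp only [mul_zero, pow_zero, mul_one] at hAB
    have hA1 : A ≤ 1 := by nlinarith [sq_nonneg B]
    have hA2 : -1 ≤ A := by nlinarith [sq_nonneg B]
    have hB1 : B ≤ 1 := by nlinarith [sq_nonneg A]
    have hB2 : -1 ≤ B := by nlinarith [sq_nonneg A]
    have hA' : A = 1 ∨ A = -1 := by
      have : A ≠ 0 := by rintro rfl; omega
      omega
    have hB' : B = 1 ∨ B = -1 := by
      have : B ≠ 0 := by rintro rfl; omega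
      omega
    refine ⟨A, A * B, ?_, ?_, ?_, ?_⟩
    · rcases hA' with rfl | rfl <;> norm_num
    · rcases hA' with rfl | rfl <;> rcases hB' with rfl | rfl <;> norm_num
    · simp only [seqT]
      rw [ex]
      rcases hA' with rfl | rfl <;> ring
    · simp only [seqT]
      rw [ey]
      rcases hA' with rfl | rfl <;> ring
  | succ j =>
    have hpAB : (p : ℤ) ∣ 3 * A ^ 2 + 8 * B ^ 2 := by
      rw [hAB]
      exact ⟨11 * p ^ (2 * j + 1), by ring⟩
    have hA' : ¬ (p : ℤ) ∣ A := by
      intro h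
      have h8 : (p : ℤ) ∣ 8 * B ^ 2 :=
        (Int.dvd_add_right (Dvd.dvd.mul_left (dvd_pow h (by norm_num)) _)).mp hpAB
      have hB' : (p : ℤ) ∣ B := by
        rcases hpp.dvd_or_dvd h8 with h | h
        · have h' : (p : ℤ) ∣ (2 : ℕ) := hpp.dvd_of_dvd_pow (n := 3) (by simpa using h)
          exact absurd h' (not_dvd_small hp5 2 (by omega) (by omega))
        · exact hpp.dvd_of_dvd_pow h
      apply hx
      rw [ex]
      exact dvd_sub (Dvd.dvd.mul_left h _) (Dvd.dvd.mul_left hB' _)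
    have hd' : (p : ℤ) ∣ u * A + 8 * v * B := by
      have : (p : ℤ) ∣ (u * A + 8 * v * B) * (u * A - 8 * v * B) := by
        have e : (u * A + 8 * v * B) * (u * A - 8 * v * B) =
            p * (p * A ^ 2) - 8 * v ^ 2 * (3 * A ^ 2 + 8 * B ^ 2) := by
          linear_combination A ^ 2 * huv
        rw [e]
        exact dvd_sub (Dvd.intro _ rfl) (Dvd.dvd.mul_left hpAB _)
      rcases hpp.dvd_or_dvd this with h | h
      · exact h
      · rw [← ex] at h
        exact absurd h hx
    have ih := seqT_complete hp hp5 huv hv j A B hAB hA' hd'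
    obtain ⟨s, e, hs, he, h1, h2⟩ := ih
    refine ⟨s, e, hs, he, ?_, ?_⟩
    · rw [seqT, ex, h1, h2]; ring
    · rw [seqT, ey, h1, h2]; ring

theorem seqT_ne (hp : p.Prime) (huv : u ^ 2 + 24 * v ^ 2 = (p : ℤ) ^ 2) (s : ℤ) (j : ℕ)
    (h1 : (seqT u v (-1) j).1 = s * (seqT u v 1 j).1)
    (h2 : (seqT u v (-1) j).2 = s * (seqT u v 1 j).2) : False := by
  have hpp : Prime (p : ℤ) := Nat.prime_iff_prime_int.mp hp
  have hp2 : (p : ℤ) ^ 2 ≠ 0 := pow_ne_zero _ hpp.ne_zero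
  induction j with
  | zero => simp only [seqT] at h1 h2; omega
  | succ j ih =>
    obtain ⟨a1, a2⟩ := seqT_conj huv (-1) j
    obtain ⟨b1, b2⟩ := seqT_conj huv 1 j
    apply ih
    · apply mul_left_cancel₀ hp2
      linear_combination -a1 + s * b1 + u * h1 + 8 * v * h2
    · apply mul_left_cancel₀ hp2
      linear_combination -a2 + s * b2 + u * h2 - 3 * v * h1

theorem seqT_abs_ne (hp : p.Prime) (hp5 : 5 ≤ p) (hp11 : p ≠ 11)
    (huv : u ^ 2 + 24 * v ^ 2 = (p : ℤ) ^ 2) (hv : v ≠ 0) (j : ℕ) :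
    ((seqT u v 1 (j + 1)).1.natAbs, (seqT u v 1 (j + 1)).2.natAbs) ≠
    ((seqT u v (-1) (j + 1)).1.natAbs, (seqT u v (-1) (j + 1)).2.natAbs) := by
  intro h
  rw [Prod.mk.injEq, Int.natAbs_eq_natAbs_iff, Int.natAbs_eq_natAbs_iff] at h
  obtain ⟨hu', hv'⟩ := uv_not_dvd hp hp5 huv hv
  have b := seqT_prim hp hp5 hp11 huv hv (e := 1) (by norm_num) j
  have c1 : (p : ℤ) ∣ u * (seqT u v 1 (j + 1)).1 + 8 * v * (seqT u v 1 (j + 1)).2 := by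
    rw [(seqT_conj huv 1 j).1]
    exact ⟨p * (seqT u v 1 j).1, by ring⟩
  have c2 : (p : ℤ) ∣ u * (seqT u v (-1) (j + 1)).1 + 8 * v * (seqT u v (-1) (j + 1)).2 := by
    rw [(seqT_conj huv (-1) j).1]
    exact ⟨p * (seqT u v (-1) j).1, by ring⟩
  rcases h with ⟨h1 | h1, h2 | h2⟩
  · exact seqT_ne hp huv 1 (j + 1) (by rw [h1]; ring) (by rw [h2]; ring)
  · refine not_both hp hp5 hu' b c1 ?_
    obtain ⟨c, hc⟩ := c2
    refine ⟨c, ?_⟩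
    rw [h1, h2]
    linear_combination hc
  · refine not_both hp hp5 hu' b c1 ?_
    obtain ⟨c, hc⟩ := c2
    refine ⟨-c, ?_⟩
    rw [h1, h2]
    linear_combination -hc
  · exact seqT_ne hp huv (-1) (j + 1) (by rw [h1]; ring) (by rw [h2]; ring)

theorem dvd_y_of_dvd_x (hp : p.Prime) (hp5 : 5 ≤ p) {x y N : ℕ} (h : 3 * x ^ 2 + 8 * y ^ 2 = N)
    (hN : p ∣ N) (hx : p ∣ x) : p ∣ y := by
  have h8 : p ∣ 8 * y ^ 2 := by
    rw [← h] at hN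
    exact (Nat.dvd_add_right (Dvd.dvd.mul_left (dvd_pow hx (by norm_num)) _)).mp hN
  rcases (Nat.Prime.dvd_mul hp).mp h8 with h | h
  · have h' : p ∣ 2 := hp.dvd_of_dvd_pow (n := 3) (by simpa using h)
    have := Nat.le_of_dvd (by norm_num) h'
    omega
  · exact hp.dvd_of_dvd_pow h

theorem card_repSet_succ (hp : p.Prime) (hp5 : 5 ≤ p) (j : ℕ) :
    (repSet (11 * p ^ (2 * (j + 1)))).card = (repSet (11 * p ^ (2 * j))).card +
      ((repSet (11 * p ^ (2 * (j + 1)))).filter (fun a => ¬ p ∣ a.1)).card := by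
  rw [← Finset.card_filter_add_card_filter_not (s := repSet (11 * p ^ (2 * (j + 1))))
    (fun a => p ∣ a.1)]
  congr 1
  symm
  apply Finset.card_bij (fun a _ => (p * a.1, p * a.2))
  · intro a ha
    rw [mem_repSet] at ha
    rw [Finset.mem_filter, mem_repSet]
    refine ⟨⟨?_, ?_⟩, Dvd.intro _ rfl⟩
    · rw [show p ^ (2 * (j + 1)) = p ^ (2 * j) * p ^ 2 by ring, ← mul_assoc, ← ha.1]
      ring
    · intro h
      rcases (Nat.Prime.dvd_mul Nat.prime_three).mp h with h | h
      · have := (Nat.prime_dvd_prime_iff_eq Nat.prime_three hp).mp h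
        omega
      · exact ha.2 h
  · intro a _ b _ h
    rw [Prod.mk.injEq] at h
    exact Prod.ext (Nat.eq_of_mul_eq_mul_left hp.pos h.1) (Nat.eq_of_mul_eq_mul_left hp.pos h.2)
  · rintro ⟨x, y⟩ hb
    rw [Finset.mem_filter, mem_repSet] at hb
    obtain ⟨⟨h1, h2⟩, h3⟩ := hb
    simp only at h1 h2 h3
    have h4 := dvd_y_of_dvd_x hp hp5 h1 ⟨11 * p ^ (2 * j + 1), by ring⟩ h3
    obtain ⟨x, rfl⟩ := h3
    obtain ⟨y, rfl⟩ := h4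
    refine ⟨(x, y), ?_, rfl⟩
    rw [mem_repSet]
    refine ⟨?_, fun h => h2 (Dvd.dvd.mul_left h _)⟩
    apply Nat.eq_of_mul_eq_mul_left (show 0 < p ^ 2 from pow_pos hp.pos 2)
    simp only
    linear_combination h1

theorem prim_eq (hp : p.Prime) (hp5 : 5 ≤ p) (hp11 : p ≠ 11)
    (huv : u ^ 2 + 24 * v ^ 2 = (p : ℤ) ^ 2) (hv : v ≠ 0) (j : ℕ) :
    (repSet (11 * p ^ (2 * (j + 1)))).filter (fun a => ¬ p ∣ a.1) =
    ({((seqT u v 1 (j + 1)).1.natAbs, (seqT u v 1 (j + 1)).2.natAbs),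
      ((seqT u v (-1) (j + 1)).1.natAbs, (seqT u v (-1) (j + 1)).2.natAbs)} :
      Finset (ℕ × ℕ)).filter (fun a => ¬ 3 ∣ a.1) := by
  have hpp : Prime (p : ℤ) := Nat.prime_iff_prime_int.mp hp
  have back : ∀ e : ℤ, (e = 1 ∨ e = -1) → 3 * (seqT u v e (j + 1)).1.natAbs ^ 2 +
      8 * (seqT u v e (j + 1)).2.natAbs ^ 2 = 11 * p ^ (2 * (j + 1)) ∧
      ¬ p ∣ (seqT u v e (j + 1)).1.natAbs := by
    intro e he
    have he : e ^ 2 = 1 := by rcases he with rfl | rfl <;> norm_num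
    constructor
    · have := seqT_norm huv he (j + 1)
      zify
      simpa [sq_abs] using this
    · rw [← Int.natCast_dvd]
      exact seqT_prim hp hp5 hp11 huv hv he j
  ext ⟨x, y⟩
  simp only [Finset.mem_filter, mem_repSet, Finset.mem_insert, Finset.mem_singleton]
  constructor
  · rintro ⟨⟨h1, h2⟩, h3⟩
    refine ⟨?_, h2⟩
    have h1' : 3 * (x : ℤ) ^ 2 + 8 * (y : ℤ) ^ 2 = 11 * (p : ℤ) ^ (2 * (j + 1)) := by exact_mod_cast h1
    have h3' : ¬ (p : ℤ) ∣ (x : ℤ) := by exact_mod_cast h3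
    have hdiv : (p : ℤ) ∣ (u * x + 8 * v * y) * (u * x - 8 * v * y) := by
      refine ⟨p * x ^ 2 - 8 * v ^ 2 * (11 * (p : ℤ) ^ (2 * j + 1)), ?_⟩
      have : (p : ℤ) ^ (2 * (j + 1)) = p * p ^ (2 * j + 1) := by ring
      rw [this] at h1'
      linear_combination x ^ 2 * huv - 8 * v ^ 2 * h1'
    have : ∃ y' : ℤ, y'.natAbs = y ∧ (p : ℤ) ∣ (u * x + 8 * v * y') := by
      rcases hpp.dvd_or_dvd hdiv with h | h
      · exact ⟨y, by simp, h⟩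
      · refine ⟨-y, by simp, ?_⟩
        obtain ⟨c, hc⟩ := h
        exact ⟨c, by linear_combination hc⟩
    obtain ⟨y', hy, hd⟩ := this
    have h1'' : 3 * (x : ℤ) ^ 2 + 8 * y' ^ 2 = 11 * (p : ℤ) ^ (2 * (j + 1)) := by
      rw [← h1', ← hy]
      simp
    obtain ⟨s, e, hs, he, hx, hy'⟩ := seqT_complete hp hp5 huv hv j x y' h1'' h3' hd
    have hs1 : s.natAbs = 1 := by
      have : s = 1 ∨ s = -1 := sq_eq_one_iff.mp hs
      rcases this with rfl | rfl <;> rfl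
    have hxx : x = (seqT u v e (j + 1)).1.natAbs := by
      have := congrArg Int.natAbs hx
      rwa [Int.natAbs_mul, hs1, one_mul, Int.natAbs_natCast] at this
    have hyy : y = (seqT u v e (j + 1)).2.natAbs := by
      have := congrArg Int.natAbs hy'
      rwa [Int.natAbs_mul, hs1, one_mul, hy] at this
    rcases he with rfl | rfl
    · left; rw [← hxx, ← hyy]
    · right; rw [← hxx, ← hyy]
  · rintro ⟨h, h3⟩
    rcases h with h | h <;> rw [Prod.mk.injEq] at h <;> obtain ⟨rfl, rfl⟩ := h
    · exact ⟨⟨(back 1 (Or.inl rfl)).1, h3⟩, (back 1 (Or.inl rfl)).2⟩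
    · exact ⟨⟨(back (-1) (Or.inr rfl)).1, h3⟩, (back (-1) (Or.inr rfl)).2⟩

theorem prim_card (hp : p.Prime) (hp5 : 5 ≤ p) (hp11 : p ≠ 11)
    (huv : u ^ 2 + 24 * v ^ 2 = (p : ℤ) ^ 2) (hv : v ≠ 0) (j : ℕ) :
    ((repSet (11 * p ^ (2 * (j + 1)))).filter (fun a => ¬ p ∣ a.1)).card =
    (if (3 : ℤ) ∣ u + (j + 1 : ℕ) * 1 * v then 0 else 1) +
      (if (3 : ℤ) ∣ u + (j + 1 : ℕ) * (-1) * v then 0 else 1) := by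
  rw [prim_eq hp hp5 hp11 huv hv]
  have hne := seqT_abs_ne hp hp5 hp11 huv hv j
  simp only [← seqT_mod3 hp hp5 huv 1 (j + 1), ← seqT_mod3 hp hp5 huv (-1) (j + 1)]
  have c : ∀ z : ℤ, (3 : ℤ) ∣ z ↔ 3 ∣ z.natAbs := fun z => by
    rw [← Int.natCast_dvd]; rfl
  simp only [c]
  rw [Finset.filter_insert, Finset.filter_singleton]
  simp only
  split_ifs <;> simp_all

end

theorem repSet_one : (repSet 11).card = 1 := by
  decide +kernel

theorem repSet_parity (p : ℕ) (hp : p.Prime) (hp5 : 5 ≤ p) (hp11 : p ≠ 11) (k : ℕ) :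
    (repSet (11 * p ^ (6 * k))).card % 2 = 1 := by
  by_cases hex : ∃ u v : ℤ, u ^ 2 + 24 * v ^ 2 = (p : ℤ) ^ 2 ∧ v ≠ 0
  · obtain ⟨u, v, huv, hv⟩ := hex
    have hu : ¬ (3 : ℤ) ∣ u := by
      have := seqT_mod3 hp hp5 huv 1 0
      simp only [seqT] at this
      intro h
      have h' : (3 : ℤ) ∣ 1 := this.mpr (by simpa using h)
      omega
    induction k with
    | zero => simpa using by rw [repSet_one]
    | succ k ih =>
      have e0 : 6 * (k + 1) = 2 * (3 * k + 2 + 1) := by ring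
      have e1 : 6 * k = 2 * (3 * k) := by ring
      rw [e0, card_repSet_succ hp hp5, card_repSet_succ hp hp5, card_repSet_succ hp hp5,
        prim_card hp hp5 hp11 huv hv, prim_card hp hp5 hp11 huv hv, prim_card hp hp5 hp11 huv hv]
      rw [e1] at ih
      push_cast
      have l0 : ∀ w : ℤ, (u + ((3 : ℤ) * k + w + 1) * 1 * v) = u + (w + 1) * v + 3 * (k * v) := by intro w; ring
      have l1 : ∀ w : ℤ, (u + ((3 : ℤ) * k + w + 1) * (-1) * v) = u - (w + 1) * v - 3 * (k * v) := by intro w; ring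
      have l2 := l0 0
      have l3 := l1 0
      rw [add_zero] at l2 l3
      rw [l2, l3, l0, l0, l1, l1]
      generalize (k : ℤ) * v = w
      split_ifs <;> omega
  · have hno : ∀ j, ((repSet (11 * p ^ (2 * (j + 1)))).filter (fun a => ¬ p ∣ a.1)) = ∅ := by
      intro j
      rw [Finset.filter_eq_empty_iff]
      rintro ⟨x, y⟩ h1 h2
      rw [mem_repSet] at h1
      apply hex
      refine sq21_uv p hp hp5 x y ?_ (by exact_mod_cast h2)
      have : p ∣ 3 * x ^ 2 + 8 * y ^ 2 := by
        rw [h1.1]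
        exact ⟨11 * p ^ (2 * j + 1), by ring⟩
      exact_mod_cast this
    have hall : ∀ j, (repSet (11 * p ^ (2 * j))).card = 1 := by
      intro j
      induction j with
      | zero => simpa using repSet_one
      | succ j ih => rw [card_repSet_succ hp hp5, hno, ih]; rfl
    rw [show 6 * k = 2 * (3 * k) by ring, hall]


theorem invol_card {α : Type*} [DecidableEq α] (s : Finset α) (g : α → α)
    (hg : ∀ a ∈ s, g a ∈ s) (hgg : ∀ a ∈ s, g (g a) = a) :
    (s.card : ZMod 2) = ((s.filter (fun a => g a = a)).card : ZMod 2) := by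
  rw [← Finset.card_filter_add_card_filter_not (s := s) (fun a => g a = a)]
  push_cast
  have : ((s.filter (fun a => ¬ g a = a)).card : ZMod 2) = 0 := by
    rw [Finset.card_eq_sum_ones]
    push_cast
    apply Finset.sum_involution (fun a _ => g a)
    · intro a _; decide
    · intro a ha _
      exact (Finset.mem_filter.mp ha).2
    · intro a ha
      rw [Finset.mem_filter] at ha ⊢
      refine ⟨hg a ha.1, ?_⟩
      rw [hgg a ha.1]
      exact fun h => ha.2 h.symm
    · intro a ha
      exact hgg a (Finset.mem_filter.mp ha).1
  rw [this, add_zero]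

/-- Pairs of natural numbers with `x²+c y²=N` and a side condition. -/
def pairSet (c N : ℕ) (C : ℕ → ℕ → Prop) [∀ x y, Decidable (C x y)] : Finset (ℕ × ℕ) :=
  ((Finset.range (N + 1)) ×ˢ (Finset.range (N + 1))).filter
    (fun a => a.1 ^ 2 + c * a.2 ^ 2 = N ∧ C a.1 a.2)

theorem mem_pairSet {c N : ℕ} (hc : 0 < c) {C : ℕ → ℕ → Prop} [∀ x y, Decidable (C x y)]
    {x y : ℕ} : (x, y) ∈ pairSet c N C ↔ x ^ 2 + c * y ^ 2 = N ∧ C x y := by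
  unfold pairSet
  simp only [Finset.mem_filter, Finset.mem_product, Finset.mem_range, and_iff_right_iff_imp]
  rintro ⟨h, -⟩
  constructor
  · nlinarith
  · have : y ^ 2 ≤ c * y ^ 2 := Nat.le_mul_of_pos_left _ hc
    nlinarith

/-- involution for `y²+3x²=4K` -/
def g2 (a : ℕ × ℕ) : ℕ × ℕ :=
  if a.2 % 4 = a.1 % 4 then
    (((3 * a.2 - a.1) + (a.1 - 3 * a.2)) / 2, (a.2 + a.1) / 2)
  else ((3 * a.2 + a.1) / 2, ((a.2 - a.1) + (a.1 - a.2)) / 2)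

theorem sq_abs_eq {a b m : ℕ} {c : ℤ} (h : (c : ℤ) * m = (a : ℤ) - b ∨ c * m = (b : ℤ) - a) :
    (c * m) ^ 2 = ((a : ℤ) - b) ^ 2 := by
  rcases h with h | h <;> rw [h]; ring

theorem g2_spec (K x y : ℕ) (hK : K % 2 = 1) (h : y ^ 2 + 3 * x ^ 2 = 4 * K)
    (hy : y % 2 = 1) (hx : x % 2 = 1) :
    ((g2 (y, x)).1 ^ 2 + 3 * (g2 (y, x)).2 ^ 2 = 4 * K ∧ (g2 (y, x)).1 % 2 = 1 ∧
      (g2 (y, x)).2 % 2 = 1) ∧ g2 (g2 (y, x)) = (y, x) ∧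
      (g2 (y, x) = (y, x) ↔ x = y ∨ y = 3 * x) := by
  by_cases hc : x % 4 = y % 4
  · have hg : g2 (y, x) = (((3 * x - y) + (y - 3 * x)) / 2, (x + y) / 2) := by
      simp only [g2]; rw [if_pos hc]
    generalize ha : ((3 * x - y) + (y - 3 * x)) / 2 = a at hg
    generalize hb : (x + y) / 2 = b at hg
    rw [hg]
    have h1 : 2 * b = x + y := by omega
    have h2 : 2 * a = (3 * x - y) + (y - 3 * x) := by omega
    have h3 : (2 * (a : ℤ)) ^ 2 = ((3 * x : ℕ) - (y : ℤ)) ^ 2 := sq_abs_eq (by omega)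
    refine ⟨⟨?_, by omega, by omega⟩, ?_, ?_⟩
    · have h1' : 2 * (b : ℤ) = x + y := by exact_mod_cast h1
      zify at h ⊢
      push_cast at h3
      have : 4 * ((a : ℤ) ^ 2 + 3 * b ^ 2) = 4 * (4 * K) := by
        linear_combination h3 + 3 * (2 * (b : ℤ) + x + y) * h1' + 4 * h
      linarith
    · simp only [g2]
      split_ifs with h' <;> ext <;> simp only <;> omega
    · rw [Prod.mk.injEq]; omega
  · have hg : g2 (y, x) = ((3 * x + y) / 2, ((x - y) + (y - x)) / 2) := by
      simp only [g2]; rw [if_neg hc]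
    generalize ha : (3 * x + y) / 2 = a at hg
    generalize hb : ((x - y) + (y - x)) / 2 = b at hg
    rw [hg]
    have h1 : 2 * a = 3 * x + y := by omega
    have h2 : 2 * b = (x - y) + (y - x) := by omega
    have h3 : (2 * (b : ℤ)) ^ 2 = ((x : ℤ) - (y : ℤ)) ^ 2 := sq_abs_eq (by omega)
    refine ⟨⟨?_, by omega, by omega⟩, ?_, ?_⟩
    · have h1' : 2 * (a : ℤ) = 3 * x + y := by exact_mod_cast h1
      zify at h ⊢
      have : 4 * ((a : ℤ) ^ 2 + 3 * b ^ 2) = 4 * (4 * K) := by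
        linear_combination 3 * h3 + (2 * (a : ℤ) + 3 * x + y) * h1' + 4 * h
      linarith
    · simp only [g2]
      split_ifs with h' <;> ext <;> simp only <;> omega
    · rw [Prod.mk.injEq]; omega

theorem card_le_one_cast {α : Type*} (s : Finset α) (q : Prop) [Decidable q] (h : s.Nonempty ↔ q)
    (hs : ∀ a ∈ s, ∀ b ∈ s, a = b) : (s.card : ZMod 2) = if q then 1 else 0 := by
  by_cases hq : q
  · obtain ⟨a, ha⟩ := h.mpr hq
    have : s = {a} := by
      ext b; rw [Finset.mem_singleton]
      exact ⟨fun hb => hs b hb a ha, fun hb => hb ▸ ha⟩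
    rw [this]; simp [hq]
  · have : s = ∅ := by
      rw [← Finset.not_nonempty_iff_eq_empty]
      exact fun h' => hq (h.mp h')
    rw [this]; simp [hq]

theorem irr3 (a b : ℕ) (ha : a % 2 = 1) : a ^ 2 ≠ 3 * b ^ 2 := by
  intro h
  have hb : IsSquare (3 : ℚ) := by
    have hb0 : (b : ℚ) ≠ 0 := by
      rintro h0
      have : b = 0 := by exact_mod_cast h0
      subst this
      have : a = 0 := by simpa using h
      omega
    refine ⟨a / b, ?_⟩
    field_simp
    exact_mod_cast h.symm
  have : IsSquare (3 : ℕ) := by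
    rw [← Rat.isSquare_natCast_iff]; exact_mod_cast hb
  exact Nat.prime_three.prime.not_isSquare this

open Classical in
theorem par2 (K : ℕ) (hK : K % 2 = 1) :
    ((pairSet 3 (4 * K) (fun y x => y % 2 = 1 ∧ x % 2 = 1)).card : ZMod 2) =
      (if (∃ z, z ^ 2 = K) ∨ (∃ z, 3 * z ^ 2 = K) then 1 else 0) := by
  rw [invol_card _ g2]
  · apply card_le_one_cast
    · constructor
      · rintro ⟨⟨y, x⟩, hm⟩
        rw [Finset.mem_filter, mem_pairSet (by norm_num)] at hm
        obtain ⟨⟨h1, h2, h3⟩, h4⟩ := hm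
        rw [(g2_spec K x y hK h1 h2 h3).2.2] at h4
        rcases h4 with rfl | rfl
        · left; exact ⟨x, by omega⟩
        · right; exact ⟨x, by ring_nf at h1 ⊢; omega⟩
      · rintro (⟨z, hz⟩ | ⟨z, hz⟩)
        · have hz2 : z % 2 = 1 := by
            have : (z ^ 2) % 2 = 1 := by omega
            rcases Nat.mod_two_eq_zero_or_one z with h | h
            · rw [Nat.pow_mod, h] at this; simp at this
            · exact h
          have : z ^ 2 + 3 * z ^ 2 = 4 * K := by omega
          refine ⟨(z, z), ?_⟩
          rw [Finset.mem_filter, mem_pairSet (by norm_num)]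
          refine ⟨⟨this, hz2, hz2⟩, ?_⟩
          exact (g2_spec K z z hK this hz2 hz2).2.2.mpr (Or.inl rfl)
        · have hz2 : z % 2 = 1 := by
            rcases Nat.mod_two_eq_zero_or_one z with h | h
            · obtain ⟨w, rfl⟩ := Nat.dvd_of_mod_eq_zero h
              ring_nf at hz; omega
            · exact h
          have : (3 * z) ^ 2 + 3 * z ^ 2 = 4 * K := by rw [← hz]; ring
          refine ⟨(3 * z, z), ?_⟩
          rw [Finset.mem_filter, mem_pairSet (by norm_num)]
          refine ⟨⟨this, by omega, hz2⟩, ?_⟩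
          exact (g2_spec K z (3 * z) hK this (by omega) hz2).2.2.mpr (Or.inr rfl)
    · rintro ⟨y, x⟩ hm ⟨y', x'⟩ hm'
      rw [Finset.mem_filter, mem_pairSet (by norm_num)] at hm hm'
      obtain ⟨⟨h1, h2, h3⟩, h4⟩ := hm
      obtain ⟨⟨h1', h2', h3'⟩, h4'⟩ := hm'
      rw [(g2_spec K x y hK h1 h2 h3).2.2] at h4
      rw [(g2_spec K x' y' hK h1' h2' h3').2.2] at h4'
      have irr := irr3
      rcases h4 with rfl | rfl <;> rcases h4' with rfl | rfl
      · have : x ^ 2 = x' ^ 2 := by omega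
        have := Nat.pow_left_injective (n := 2) (by norm_num) this
        rw [this]
      · exfalso
        refine irr x x' h3 ?_
        ring_nf at h1 h1' ⊢; omega
      · exfalso
        refine irr x' x h3' ?_
        ring_nf at h1 h1' ⊢; omega
      · have : x ^ 2 = x' ^ 2 := by ring_nf at h1 h1' ⊢; omega
        have := Nat.pow_left_injective (n := 2) (by norm_num) this
        rw [this]
  · rintro ⟨y, x⟩ hm
    rw [mem_pairSet (by norm_num)] at hm ⊢
    exact (g2_spec K x y hK hm.1 hm.2.1 hm.2.2).1
  · rintro ⟨y, x⟩ hm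
    rw [mem_pairSet (by norm_num)] at hm
    exact (g2_spec K x y hK hm.1 hm.2.1 hm.2.2).2.1

/-- involution for `y²+7x²=16M` -/
def g3 (a : ℕ × ℕ) : ℕ × ℕ :=
  if a.1 % 16 = (3 * a.2) % 16 then
    ((21 * a.2 + a.1) / 8, ((3 * a.1 - a.2) + (a.2 - 3 * a.1)) / 8)
  else (((21 * a.2 - a.1) + (a.1 - 21 * a.2)) / 8, (3 * a.1 + a.2) / 8)

theorem res16 (x y M : ℕ) (hM : M % 2 = 1) (h : y ^ 2 + 7 * x ^ 2 = 16 * M)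
    (hy : y % 2 = 1) (hx : x % 2 = 1) : y % 16 = (3 * x) % 16 ∨ (y + 3 * x) % 16 = 0 := by
  have key : ∀ a b : Fin 32, a.val % 2 = 1 → b.val % 2 = 1 → (b.val ^ 2 + 7 * a.val ^ 2) % 32 = 16 →
      b.val % 16 = (3 * a.val) % 16 ∨ (b.val + 3 * a.val) % 16 = 0 := by decide +kernel
  have := key ⟨x % 32, Nat.mod_lt _ (by norm_num)⟩ ⟨y % 32, Nat.mod_lt _ (by norm_num)⟩
    (by simp only; omega) (by simp only; omega) (by
      have e : (y ^ 2 + 7 * x ^ 2) % 32 = 16 := by omega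
      rw [← e]
      simp [Nat.add_mod, Nat.mul_mod, Nat.pow_mod])
  simp only at this
  omega

theorem g3_spec (M x y : ℕ) (hM : M % 2 = 1) (h : y ^ 2 + 7 * x ^ 2 = 16 * M)
    (hy : y % 2 = 1) (hx : x % 2 = 1) (hx3 : x % 3 ≠ 0) :
    ((g3 (y, x)).1 ^ 2 + 7 * (g3 (y, x)).2 ^ 2 = 16 * M ∧ (g3 (y, x)).1 % 2 = 1 ∧
      (g3 (y, x)).2 % 2 = 1 ∧ (g3 (y, x)).2 % 3 ≠ 0) ∧ g3 (g3 (y, x)) = (y, x) ∧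
      (g3 (y, x) = (y, x) ↔ y = 3 * x) := by
  have hres := res16 x y M hM h hy hx
  by_cases hc : y % 16 = (3 * x) % 16
  · have hg : g3 (y, x) = ((21 * x + y) / 8, ((3 * y - x) + (x - 3 * y)) / 8) := by
      simp only [g3]; rw [if_pos hc]
    generalize ha : (21 * x + y) / 8 = a at hg
    generalize hb : ((3 * y - x) + (x - 3 * y)) / 8 = b at hg
    rw [hg]
    have h1 : 8 * a = 21 * x + y := by omega
    have h2 : 8 * b = (3 * y - x) + (x - 3 * y) := by omega
    have h3 : (8 * (b : ℤ)) ^ 2 = ((3 * y : ℕ) - (x : ℤ)) ^ 2 := sq_abs_eq (by omega)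
    refine ⟨⟨?_, by omega, by omega, by omega⟩, ?_, ?_⟩
    · have h1' : 8 * (a : ℤ) = 21 * x + y := by exact_mod_cast h1
      zify at h ⊢
      push_cast at h3
      have : 64 * ((a : ℤ) ^ 2 + 7 * b ^ 2) = 64 * (16 * M) := by
        linear_combination 7 * h3 + (8 * (a : ℤ) + 21 * x + y) * h1' + 64 * h
      linarith
    · simp only [g3]
      split_ifs with h' <;> ext <;> simp only <;> omega
    · rw [Prod.mk.injEq]; omega
  · have hc' : (y + 3 * x) % 16 = 0 := by tauto
    have hg : g3 (y, x) = (((21 * x - y) + (y - 21 * x)) / 8, (3 * y + x) / 8) := by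
      simp only [g3]; rw [if_neg hc]
    generalize ha : ((21 * x - y) + (y - 21 * x)) / 8 = a at hg
    generalize hb : (3 * y + x) / 8 = b at hg
    rw [hg]
    have h1 : 8 * b = 3 * y + x := by omega
    have h2 : 8 * a = (21 * x - y) + (y - 21 * x) := by omega
    have h3 : (8 * (a : ℤ)) ^ 2 = ((21 * x : ℕ) - (y : ℤ)) ^ 2 := sq_abs_eq (by omega)
    refine ⟨⟨?_, by omega, by omega, by omega⟩, ?_, ?_⟩
    · have h1' : 8 * (b : ℤ) = 3 * y + x := by exact_mod_cast h1
      zify at h ⊢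
      push_cast at h3
      have : 64 * ((a : ℤ) ^ 2 + 7 * b ^ 2) = 64 * (16 * M) := by
        linear_combination h3 + 7 * (8 * (b : ℤ) + 3 * y + x) * h1' + 64 * h
      linarith
    · simp only [g3]
      split_ifs with h' <;> ext <;> simp only <;> omega
    · rw [Prod.mk.injEq]; omega

open Classical in
theorem par3 (M : ℕ) (hM : M % 2 = 1) :
    ((pairSet 7 (16 * M) (fun y x => y % 2 = 1 ∧ x % 2 = 1 ∧ x % 3 ≠ 0)).card : ZMod 2) =
      (if (∃ z, z ^ 2 = M ∧ z % 3 ≠ 0) then 1 else 0) := by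
  rw [invol_card _ g3]
  · apply card_le_one_cast
    · constructor
      · rintro ⟨⟨y, x⟩, hm⟩
        rw [Finset.mem_filter, mem_pairSet (by norm_num)] at hm
        obtain ⟨⟨h1, h2, h3, h5⟩, h4⟩ := hm
        rw [(g3_spec M x y hM h1 h2 h3 h5).2.2] at h4
        subst h4
        exact ⟨x, by ring_nf at h1 ⊢; omega, h5⟩
      · rintro ⟨z, hz, hz3⟩
        have hz2 : z % 2 = 1 := by
          have : (z ^ 2) % 2 = 1 := by omega
          rcases Nat.mod_two_eq_zero_or_one z with h | h
          · rw [Nat.pow_mod, h] at this; simp at this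
          · exact h
        have : (3 * z) ^ 2 + 7 * z ^ 2 = 16 * M := by rw [← hz]; ring
        refine ⟨(3 * z, z), ?_⟩
        rw [Finset.mem_filter, mem_pairSet (by norm_num)]
        refine ⟨⟨this, by omega, hz2, hz3⟩, ?_⟩
        exact (g3_spec M z (3 * z) hM this (by omega) hz2 hz3).2.2.mpr rfl
    · rintro ⟨y, x⟩ hm ⟨y', x'⟩ hm'
      rw [Finset.mem_filter, mem_pairSet (by norm_num)] at hm hm'
      obtain ⟨⟨h1, h2, h3, h5⟩, h4⟩ := hm
      obtain ⟨⟨h1', h2', h3', h5'⟩, h4'⟩ := hm'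
      rw [(g3_spec M x y hM h1 h2 h3 h5).2.2] at h4
      rw [(g3_spec M x' y' hM h1' h2' h3' h5').2.2] at h4'
      subst h4 h4'
      have : x ^ 2 = x' ^ 2 := by ring_nf at h1 h1' ⊢; omega
      have := Nat.pow_left_injective (n := 2) (by norm_num) this
      rw [this]
  · rintro ⟨y, x⟩ hm
    rw [mem_pairSet (by norm_num)] at hm ⊢
    exact (g3_spec M x y hM hm.1 hm.2.1 hm.2.2.1 hm.2.2.2).1
  · rintro ⟨y, x⟩ hm
    rw [mem_pairSet (by norm_num)] at hm
    exact (g3_spec M x y hM hm.1 hm.2.1 hm.2.2.1 hm.2.2.2).2.1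

/-- involution for `x²+2y²=3K`, `3 ∤ K` -/
def g1 (a : ℕ × ℕ) : ℕ × ℕ :=
  if a.1 % 3 = a.2 % 3 then
    (((4 * a.2 - a.1) + (a.1 - 4 * a.2)) / 3, (2 * a.1 + a.2) / 3)
  else ((4 * a.2 + a.1) / 3, ((2 * a.1 - a.2) + (a.2 - 2 * a.1)) / 3)

/-- descent map for `x²+2y²=9K` -/
def d1 (a : ℕ × ℕ) : ℕ × ℕ :=
  if a.1 % 3 = a.2 % 3 then
    ((a.1 + 2 * a.2) / 3, ((a.1 - a.2) + (a.2 - a.1)) / 3)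
  else (((a.1 - 2 * a.2) + (2 * a.2 - a.1)) / 3, (a.1 + a.2) / 3)

/-- ascent map, inverse to `d1` -/
def u1 (a : ℕ × ℕ) : ℕ × ℕ :=
  if a.1 % 3 = a.2 % 3 then
    ((a.1 - 2 * a.2) + (2 * a.2 - a.1), a.1 + a.2)
  else (a.1 + 2 * a.2, (a.1 - a.2) + (a.2 - a.1))

theorem mod3_eq (K : ℕ) (a b : ℕ) (h : a ^ 2 + 2 * b ^ 2 = 3 * K) (hab : ¬ (a % 3 ≠ 0 ∧ b % 3 ≠ 0)) :
    a % 3 = 0 ∧ b % 3 = 0 := by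
  have key : ∀ x y : Fin 3, (x.val ^ 2 + 2 * y.val ^ 2) % 3 = 0 →
      ¬ (x.val ≠ 0 ∧ y.val ≠ 0) → x.val = 0 ∧ y.val = 0 := by
    decide
  apply key ⟨a % 3, Nat.mod_lt _ (by norm_num)⟩ ⟨b % 3, Nat.mod_lt _ (by norm_num)⟩ _ hab
  have e : (a ^ 2 + 2 * b ^ 2) % 3 = 0 := by omega
  simpa [Nat.add_mod, Nat.mul_mod, Nat.pow_mod] using e

theorem d1_spec (K x y : ℕ) (h : x ^ 2 + 2 * y ^ 2 = 3 * (3 * K)) (hx : x % 3 ≠ 0) (hy : y % 3 ≠ 0) :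
    ((d1 (x, y)).1 ^ 2 + 2 * (d1 (x, y)).2 ^ 2 = 3 * K ∧ (d1 (x, y)).1 % 3 ≠ 0 ∧
      (d1 (x, y)).2 % 3 ≠ 0) ∧ u1 (d1 (x, y)) = (x, y) := by
  by_cases hc : x % 3 = y % 3
  · have hg : d1 (x, y) = ((x + 2 * y) / 3, ((x - y) + (y - x)) / 3) := by
      simp only [d1]; rw [if_pos hc]
    generalize ha : (x + 2 * y) / 3 = a at hg
    generalize hb : ((x - y) + (y - x)) / 3 = b at hg
    rw [hg]
    have h1 : 3 * a = x + 2 * y := by omega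
    have h2 : 3 * b = (x - y) + (y - x) := by omega
    have h3 : (3 * (b : ℤ)) ^ 2 = ((x : ℤ) - (y : ℤ)) ^ 2 := sq_abs_eq (by omega)
    have heq : a ^ 2 + 2 * b ^ 2 = 3 * K := by
      have h1' : 3 * (a : ℤ) = x + 2 * y := by exact_mod_cast h1
      zify at h ⊢
      have : 9 * ((a : ℤ) ^ 2 + 2 * b ^ 2) = 9 * (3 * K) := by
        linear_combination 2 * h3 + (3 * (a : ℤ) + x + 2 * y) * h1' + 3 * h
      linarith
    have hn : a % 3 ≠ 0 ∧ b % 3 ≠ 0 := by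
      by_contra hcon
      have := mod3_eq K a b heq hcon
      omega
    refine ⟨⟨heq, hn⟩, ?_⟩
    obtain ⟨hn1, hn2⟩ := hn
    clear h heq h3
    simp only [u1]
    rcases (by omega : a % 3 = 1 ∨ a % 3 = 2) with h5 | h5 <;>
      rcases (by omega : b % 3 = 1 ∨ b % 3 = 2) with h6 | h6 <;> rw [h5, h6] <;>
      ext <;> simp <;> omega
  · have hg : d1 (x, y) = (((x - 2 * y) + (2 * y - x)) / 3, (x + y) / 3) := by
      simp only [d1]; rw [if_neg hc]
    generalize ha : ((x - 2 * y) + (2 * y - x)) / 3 = a at hg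
    generalize hb : (x + y) / 3 = b at hg
    rw [hg]
    have hs : (x + y) % 3 = 0 := by
      rcases (by omega : x % 3 = 1 ∨ x % 3 = 2) with h5 | h5 <;>
        rcases (by omega : y % 3 = 1 ∨ y % 3 = 2) with h6 | h6 <;> omega
    have h1 : 3 * b = x + y := by omega
    have h2 : 3 * a = (x - 2 * y) + (2 * y - x) := by omega
    have h3 : (3 * (a : ℤ)) ^ 2 = ((x : ℤ) - (2 * y : ℕ)) ^ 2 := sq_abs_eq (by omega)
    have heq : a ^ 2 + 2 * b ^ 2 = 3 * K := by
      have h1' : 3 * (b : ℤ) = x + y := by exact_mod_cast h1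
      push_cast at h3
      zify at h ⊢
      have : 9 * ((a : ℤ) ^ 2 + 2 * b ^ 2) = 9 * (3 * K) := by
        linear_combination h3 + 2 * (3 * (b : ℤ) + x + y) * h1' + 3 * h
      linarith
    have hn : a % 3 ≠ 0 ∧ b % 3 ≠ 0 := by
      by_contra hcon
      have := mod3_eq K a b heq hcon
      omega
    refine ⟨⟨heq, hn⟩, ?_⟩
    obtain ⟨hn1, hn2⟩ := hn
    clear h heq h3
    simp only [u1]
    rcases (by omega : a % 3 = 1 ∨ a % 3 = 2) with h5 | h5 <;>
      rcases (by omega : b % 3 = 1 ∨ b % 3 = 2) with h6 | h6 <;> rw [h5, h6] <;>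
      ext <;> simp <;> omega

theorem u1_spec (K x y : ℕ) (h : x ^ 2 + 2 * y ^ 2 = 3 * K) (hx : x % 3 ≠ 0) (hy : y % 3 ≠ 0) :
    ((u1 (x, y)).1 ^ 2 + 2 * (u1 (x, y)).2 ^ 2 = 3 * (3 * K) ∧ (u1 (x, y)).1 % 3 ≠ 0 ∧
      (u1 (x, y)).2 % 3 ≠ 0) ∧ d1 (u1 (x, y)) = (x, y) := by
  by_cases hc : x % 3 = y % 3
  · have hg : u1 (x, y) = ((x - 2 * y) + (2 * y - x), x + y) := by
      simp only [u1]; rw [if_pos hc]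
    generalize ha : ((x - 2 * y) + (2 * y - x)) = a at hg
    rw [hg]
    have h3 : (1 * (a : ℤ)) ^ 2 = ((x : ℤ) - (2 * y : ℕ)) ^ 2 := sq_abs_eq (by omega)
    refine ⟨⟨?_, by simp only; omega, by simp only; omega⟩, ?_⟩
    · push_cast at h3
      zify at h ⊢
      linear_combination h3 + 3 * h
    · simp only [d1]
      split_ifs with h' <;> ext <;> simp only <;> omega
  · have hg : u1 (x, y) = (x + 2 * y, (x - y) + (y - x)) := by
      simp only [u1]; rw [if_neg hc]
    generalize ha : ((x - y) + (y - x)) = a at hg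
    rw [hg]
    have h3 : (1 * (a : ℤ)) ^ 2 = ((x : ℤ) - (y : ℕ)) ^ 2 := sq_abs_eq (by omega)
    refine ⟨⟨?_, by simp only; omega, by simp only; omega⟩, ?_⟩
    · push_cast at h3
      zify at h ⊢
      linear_combination 2 * h3 + 3 * h
    · simp only [d1]
      split_ifs with h' <;> ext <;> simp only <;> omega

theorem g1_spec (K x y : ℕ) (hK : K % 2 = 1) (hK3 : K % 3 ≠ 0) (h : x ^ 2 + 2 * y ^ 2 = 3 * K)
    (hx : x % 3 ≠ 0) (hy : y % 3 ≠ 0) :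
    ((g1 (x, y)).1 ^ 2 + 2 * (g1 (x, y)).2 ^ 2 = 3 * K ∧ (g1 (x, y)).1 % 3 ≠ 0 ∧
      (g1 (x, y)).2 % 3 ≠ 0) ∧ g1 (g1 (x, y)) = (x, y) ∧
      (g1 (x, y) = (x, y) ↔ x = y) := by
  have h2y : x ≠ 2 * y := by
    rintro rfl
    ring_nf at h; omega
  have fin : ∀ a b : ℕ, a ^ 2 + 2 * b ^ 2 = 3 * K → ¬ (a % 3 = 0 ∧ b % 3 = 0) := by
    rintro a b hab ⟨h1, h2⟩
    obtain ⟨a, rfl⟩ := Nat.dvd_of_mod_eq_zero h1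
    obtain ⟨b, rfl⟩ := Nat.dvd_of_mod_eq_zero h2
    ring_nf at hab; omega
  by_cases hc : x % 3 = y % 3
  · have hg : g1 (x, y) = (((4 * y - x) + (x - 4 * y)) / 3, (2 * x + y) / 3) := by
      simp only [g1]; rw [if_pos hc]
    generalize ha : ((4 * y - x) + (x - 4 * y)) / 3 = a at hg
    generalize hb : (2 * x + y) / 3 = b at hg
    rw [hg]
    have h1 : 3 * b = 2 * x + y := by omega
    have h2 : 3 * a = (4 * y - x) + (x - 4 * y) := by omega
    have h3 : (3 * (a : ℤ)) ^ 2 = ((4 * y : ℕ) - (x : ℤ)) ^ 2 := sq_abs_eq (by omega)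
    have heq : a ^ 2 + 2 * b ^ 2 = 3 * K := by
      have h1' : 3 * (b : ℤ) = 2 * x + y := by exact_mod_cast h1
      push_cast at h3
      zify at h ⊢
      have : 9 * ((a : ℤ) ^ 2 + 2 * b ^ 2) = 9 * (3 * K) := by
        linear_combination h3 + 2 * (3 * (b : ℤ) + 2 * x + y) * h1' + 9 * h
      linarith
    have hn : a % 3 ≠ 0 ∧ b % 3 ≠ 0 := by
      by_contra hcon
      exact fin a b heq (mod3_eq K a b heq hcon)
    refine ⟨⟨heq, hn⟩, ?_, ?_⟩
    · simp only [g1]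
      split_ifs with h' <;> ext <;> simp only <;> omega
    · rw [Prod.mk.injEq]; omega
  · have hg : g1 (x, y) = ((4 * y + x) / 3, ((2 * x - y) + (y - 2 * x)) / 3) := by
      simp only [g1]; rw [if_neg hc]
    generalize ha : (4 * y + x) / 3 = a at hg
    generalize hb : ((2 * x - y) + (y - 2 * x)) / 3 = b at hg
    rw [hg]
    have hs : (x + y) % 3 = 0 := by
      rcases (by omega : x % 3 = 1 ∨ x % 3 = 2) with h5 | h5 <;>
        rcases (by omega : y % 3 = 1 ∨ y % 3 = 2) with h6 | h6 <;> omega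
    have h1 : 3 * a = 4 * y + x := by omega
    have h2 : 3 * b = (2 * x - y) + (y - 2 * x) := by omega
    have h3 : (3 * (b : ℤ)) ^ 2 = ((2 * x : ℕ) - (y : ℤ)) ^ 2 := sq_abs_eq (by omega)
    have heq : a ^ 2 + 2 * b ^ 2 = 3 * K := by
      have h1' : 3 * (a : ℤ) = 4 * y + x := by exact_mod_cast h1
      push_cast at h3
      zify at h ⊢
      have : 9 * ((a : ℤ) ^ 2 + 2 * b ^ 2) = 9 * (3 * K) := by
        linear_combination 2 * h3 + (3 * (a : ℤ) + 4 * y + x) * h1' + 9 * h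
      linarith
    have hn : a % 3 ≠ 0 ∧ b % 3 ≠ 0 := by
      by_contra hcon
      exact fin a b heq (mod3_eq K a b heq hcon)
    refine ⟨⟨heq, hn⟩, ?_, ?_⟩
    · simp only [g1]
      split_ifs with h' <;> ext <;> simp only <;> omega
    · rw [Prod.mk.injEq]; omega

theorem card_descent (K : ℕ) :
    (pairSet 2 (3 * (3 * K)) (fun x y => x % 3 ≠ 0 ∧ y % 3 ≠ 0)).card =
    (pairSet 2 (3 * K) (fun x y => x % 3 ≠ 0 ∧ y % 3 ≠ 0)).card := by
  apply Finset.card_bij' (fun a _ => d1 a) (fun a _ => u1 a)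
  · rintro ⟨x, y⟩ hm
    rw [mem_pairSet (by norm_num)] at hm ⊢
    exact (d1_spec K x y hm.1 hm.2.1 hm.2.2).1
  · rintro ⟨x, y⟩ hm
    rw [mem_pairSet (by norm_num)] at hm ⊢
    exact (u1_spec K x y hm.1 hm.2.1 hm.2.2).1
  · rintro ⟨x, y⟩ hm
    rw [mem_pairSet (by norm_num)] at hm
    exact (d1_spec K x y hm.1 hm.2.1 hm.2.2).2
  · rintro ⟨x, y⟩ hm
    rw [mem_pairSet (by norm_num)] at hm
    exact (u1_spec K x y hm.1 hm.2.1 hm.2.2).2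

open Classical in
theorem par1 (K : ℕ) (hK : K % 2 = 1) :
    ((pairSet 2 (3 * K) (fun x y => x % 3 ≠ 0 ∧ y % 3 ≠ 0)).card : ZMod 2) =
      (if (∃ z, z ^ 2 = K) ∨ (∃ z, 3 * z ^ 2 = K) then 1 else 0) := by
  induction K using Nat.strong_induction_on with
  | _ K ih =>
  by_cases hK3 : K % 3 = 0
  · obtain ⟨L, rfl⟩ := Nat.dvd_of_mod_eq_zero hK3
    rw [card_descent, ih L (by omega) (by omega)]
    congr 1
    rw [eq_iff_iff]
    constructor
    · rintro (⟨z, hz⟩ | ⟨z, hz⟩)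
      · right; exact ⟨z, by omega⟩
      · left; exact ⟨3 * z, by rw [← hz]; ring⟩
    · rintro (⟨z, hz⟩ | ⟨z, hz⟩)
      · right
        have h3 : 3 ∣ z := Nat.prime_three.dvd_of_dvd_pow (n := 2) ⟨L, hz⟩
        obtain ⟨w, rfl⟩ := h3
        exact ⟨w, by ring_nf at hz ⊢; omega⟩
      · left; exact ⟨z, by omega⟩
  rw [invol_card _ g1]
  · apply card_le_one_cast
    · constructor
      · rintro ⟨⟨x, y⟩, hm⟩
        rw [Finset.mem_filter, mem_pairSet (by norm_num)] at hm
        obtain ⟨⟨h1, h2, h3⟩, h4⟩ := hm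
        rw [(g1_spec K x y hK hK3 h1 h2 h3).2.2] at h4
        subst h4
        left; exact ⟨x, by omega⟩
      · rintro (⟨z, hz⟩ | ⟨z, hz⟩)
        · have hz2 : z % 3 ≠ 0 := by
            intro h
            obtain ⟨w, rfl⟩ := Nat.dvd_of_mod_eq_zero h
            ring_nf at hz; omega
          have : z ^ 2 + 2 * z ^ 2 = 3 * K := by omega
          refine ⟨(z, z), ?_⟩
          rw [Finset.mem_filter, mem_pairSet (by norm_num)]
          refine ⟨⟨this, hz2, hz2⟩, ?_⟩
          exact (g1_spec K z z hK hK3 this hz2 hz2).2.2.mpr rfl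
        · omega
    · rintro ⟨x, y⟩ hm ⟨x', y'⟩ hm'
      rw [Finset.mem_filter, mem_pairSet (by norm_num)] at hm hm'
      obtain ⟨⟨h1, h2, h3⟩, h4⟩ := hm
      obtain ⟨⟨h1', h2', h3'⟩, h4'⟩ := hm'
      rw [(g1_spec K x y hK hK3 h1 h2 h3).2.2] at h4
      rw [(g1_spec K x' y' hK hK3 h1' h2' h3').2.2] at h4'
      subst h4 h4'
      have : x ^ 2 = x' ^ 2 := by omega
      have := Nat.pow_left_injective (n := 2) (by norm_num) this
      rw [this]
  · rintro ⟨x, y⟩ hm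
    rw [mem_pairSet (by norm_num)] at hm ⊢
    exact (g1_spec K x y hK hK3 hm.1 hm.2.1 hm.2.2).1
  · rintro ⟨x, y⟩ hm
    rw [mem_pairSet (by norm_num)] at hm
    exact (g1_spec K x y hK hK3 hm.1 hm.2.1 hm.2.2).2.1

open PowerSeries in
theorem b21_gf : (PowerSeries.mk fun n => (b21 n : ZMod 2)) * pentagonalSeries (ZMod 2)
    = expand 21 (by norm_num) (pentagonalSeries (ZMod 2)) := by
  let _ : TopologicalSpace (ZMod 2) := ⊥
  have _ : DiscreteTopology (ZMod 2) := ⟨rfl⟩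
  open scoped PowerSeries.WithPiTopology in
  have h1 := Nat.Partition.hasProd_powerSeriesMk_card_countRestricted (ZMod 2) (m := 21) (by norm_num)
  have h2 := PowerSeries.WithPiTopology.hasProd_one_sub_X_pow (ZMod 2)
  have h3 := h1.mul h2
  have hc : Continuous (expand 21 (by norm_num) : PowerSeries (ZMod 2) →ₐ[ZMod 2] _) := by
    rw [continuous_iff_continuousAt]
    intro f
    rw [ContinuousAt, PowerSeries.WithPiTopology.tendsto_iff_coeff_tendsto]
    intro d
    simp only [coeff_expand]
    split_ifs
    · exact (PowerSeries.WithPiTopology.continuous_coeff (ZMod 2) _).continuousAt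
    · exact tendsto_const_nhds
  have h4 := h2.map (expand 21 (by norm_num) : PowerSeries (ZMod 2) →ₐ[ZMod 2] _) hc
  have e : (fun n => (b21 n : ZMod 2)) = fun n ↦ ((Nat.Partition.countRestricted n 21).card : ZMod 2) := by
    ext n
    rw [← Nat.Partition.card_restricted_eq_card_countRestricted n (by norm_num)]
    rfl
  rw [e]
  refine h3.unique ?_
  refine (congrArg (fun f => HasProd f (expand 21 (by norm_num) (pentagonalSeries (ZMod 2)))) ?_).mpr h4
  funext i
  simp only [Function.comp_apply, map_sub, map_one, map_pow, expand_X]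
  have := geom_sum_mul_neg ((X : PowerSeries (ZMod 2)) ^ (i+1)) 21
  simp only [pow_mul]
  rw [this]
  ring


open Classical in
/-- theta-type series over `ZMod 2` -/
noncomputable def theta (r s : ℕ) (C : ℕ → Prop) : PowerSeries (ZMod 2) :=
  PowerSeries.mk fun i => if ∃ x, C x ∧ x ^ 2 = r * i + s then 1 else 0

theorem pent_eq : PowerSeries.pentagonalSeries (ZMod 2) =
    theta 24 1 (fun x => x % 2 = 1 ∧ x % 3 ≠ 0) := by
  ext n
  simp only [theta, PowerSeries.coeff_mk]
  have key : n ∈ Set.range pentagonal ↔ ∃ x, (x % 2 = 1 ∧ x % 3 ≠ 0) ∧ x ^ 2 = 24 * n + 1 := by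
    constructor
    · rintro ⟨k, rfl⟩
      have := two_mul_natCast_pentagonal k
      refine ⟨(6 * k - 1).natAbs, by omega, ?_⟩
      zify
      rw [sq_abs]
      linear_combination -12 * this
    · rintro ⟨x, ⟨h1, h2⟩, h⟩
      rcases (by omega : x % 6 = 1 ∨ x % 6 = 5) with h6 | h6
      · refine ⟨-((x / 6 : ℕ) : ℤ), ?_⟩
        have h7 : (x : ℤ) = 6 * ((x / 6 : ℕ) : ℤ) + 1 := by omega
        generalize ((x / 6 : ℕ) : ℤ) = k at *
        have := two_mul_natCast_pentagonal (-k)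
        zify at h ⊢
        rw [h7] at h
        linarith
      · refine ⟨((x / 6 : ℕ) : ℤ) + 1, ?_⟩
        have h7 : (x : ℤ) = 6 * ((x / 6 : ℕ) : ℤ) + 5 := by omega
        generalize ((x / 6 : ℕ) : ℤ) = k at *
        have := two_mul_natCast_pentagonal (k + 1)
        zify at h ⊢
        rw [h7] at h
        linarith
  have z := PowerSeries.coeff_pentagonalSeries_eq_zero_iff (ZMod 2) (n := n)
  rw [key] at z
  have tw : ∀ a : ZMod 2, a ≠ 0 → a = 1 := by decide
  split_ifs with hq
  · exact tw _ (fun h0 => z.mp h0 hq)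
  · exact z.mpr hq

open Classical in
theorem coeff_expand_theta (r s : ℕ) (C : ℕ → Prop) (hr : 0 < r)
    (hC : ∀ x, C x → ∃ i, x ^ 2 = r * i + s) (a : ℕ) (ha : a ≠ 0) (n : ℕ) :
    PowerSeries.coeff n (PowerSeries.expand a ha (theta r s C)) =
      if ∃ x, C x ∧ a * x ^ 2 = r * n + a * s then 1 else 0 := by
  by_cases hd : a ∣ n
  · obtain ⟨m, rfl⟩ := hd
    rw [PowerSeries.coeff_expand_mul]
    simp only [theta, PowerSeries.coeff_mk]
    congr 1
    rw [eq_iff_iff]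
    refine exists_congr fun x => and_congr_right fun _ => ?_
    rw [show r * (a * m) + a * s = a * (r * m + s) by ring]
    exact (mul_right_inj' ha).symm
  · rw [PowerSeries.coeff_expand_of_not_dvd _ _ _ hd, if_neg]
    rintro ⟨x, hx, h⟩
    obtain ⟨i, hi⟩ := hC x hx
    rw [hi] at h
    apply hd
    refine ⟨i, ?_⟩
    have : r * n = r * (a * i) := by linarith
    exact Nat.eq_of_mul_eq_mul_left hr this

theorem coeff_theta_mul (ra sa rb sb : ℕ) (CA CB : ℕ → Prop) (hra : 0 < ra) (hrb : 0 < rb)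
    (hA : ∀ x, CA x → ∃ i, x ^ 2 = ra * i + sa) (hB : ∀ x, CB x → ∃ i, x ^ 2 = rb * i + sb)
    (a b : ℕ) (ha : a ≠ 0) (hb : b ≠ 0) (n : ℕ) (S : Finset (ℕ × ℕ))
    (hS : ∀ x y, (x, y) ∈ S ↔ CA x ∧ CB y ∧
      rb * a * x ^ 2 + ra * b * y ^ 2 = ra * rb * n + rb * a * sa + ra * b * sb) :
    PowerSeries.coeff n (PowerSeries.expand a ha (theta ra sa CA) *
      PowerSeries.expand b hb (theta rb sb CB)) = (S.card : ZMod 2) := by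
  classical
  rw [PowerSeries.coeff_mul]
  simp only [coeff_expand_theta ra sa CA hra hA, coeff_expand_theta rb sb CB hrb hB]
  simp only [← ite_and, mul_ite, mul_one, mul_zero]
  rw [Finset.sum_boole]
  congr 1
  symm
  have inj : ∀ c x y : ℕ, c ≠ 0 → c * x ^ 2 = c * y ^ 2 → x = y := by
    intro c x y hc h
    exact Nat.pow_left_injective (n := 2) (by norm_num) ((mul_right_inj' hc).mp h)
  refine Finset.card_bij (fun p _ => ((a * p.1 ^ 2 - a * sa) / ra, (b * p.2 ^ 2 - b * sb) / rb))
    ?_ ?_ ?_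
  · rintro ⟨x, y⟩ hm
    obtain ⟨h1, h2, h3⟩ := (hS x y).mp hm
    obtain ⟨i, hi⟩ := hA x h1
    obtain ⟨j, hj⟩ := hB y h2
    have ei : (a * x ^ 2 - a * sa) / ra = a * i := by
      rw [hi, show a * (ra * i + sa) - a * sa = ra * (a * i) by
        rw [Nat.sub_eq_iff_eq_add (Nat.mul_le_mul_left _ (Nat.le_add_left _ _))]; ring]
      exact Nat.mul_div_cancel_left _ hra
    have ej : (b * y ^ 2 - b * sb) / rb = b * j := by
      rw [hj, show b * (rb * j + sb) - b * sb = rb * (b * j) by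
        rw [Nat.sub_eq_iff_eq_add (Nat.mul_le_mul_left _ (Nat.le_add_left _ _))]; ring]
      exact Nat.mul_div_cancel_left _ hrb
    simp only [ei, ej, Finset.mem_filter]
    refine ⟨Finset.HasAntidiagonal.mem_antidiagonal.mpr ?_, ⟨y, h2, by rw [hj]; ring⟩, ⟨x, h1, by rw [hi]; ring⟩⟩
    rw [hi, hj] at h3
    have : ra * rb * (a * i + b * j) = ra * rb * n := by linarith
    exact Nat.eq_of_mul_eq_mul_left (by positivity) this
  · rintro ⟨x, y⟩ hm ⟨x', y'⟩ hm' heq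
    obtain ⟨h1, h2, h3⟩ := (hS x y).mp hm
    obtain ⟨h1', h2', h3'⟩ := (hS x' y').mp hm'
    obtain ⟨i, hi⟩ := hA x h1
    obtain ⟨i', hi'⟩ := hA x' h1'
    obtain ⟨j, hj⟩ := hB y h2
    obtain ⟨j', hj'⟩ := hB y' h2'
    have gen : ∀ c r s t k : ℕ, 0 < r → t = r * k + s → (c * t - c * s) / r = c * k := by
      intro c r s t k hr ht
      rw [ht, show c * (r * k + s) - c * s = r * (c * k) by
        rw [Nat.sub_eq_iff_eq_add (Nat.mul_le_mul_left _ (Nat.le_add_left _ _))]; ring]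
      exact Nat.mul_div_cancel_left _ hr
    simp only [Prod.mk.injEq] at heq
    rw [gen a ra sa _ i hra hi, gen a ra sa _ i' hra hi', gen b rb sb _ j hrb hj,
      gen b rb sb _ j' hrb hj'] at heq
    have e1 : i = i' := (mul_right_inj' ha).mp heq.1
    have e2 : j = j' := (mul_right_inj' hb).mp heq.2
    rw [inj 1 x x' one_ne_zero (by rw [hi, hi', e1]), inj 1 y y' one_ne_zero (by rw [hj, hj', e2])]
  · rintro ⟨i, j⟩ hm
    simp only [Finset.mem_filter] at hm
    obtain ⟨hn, ⟨y, hy, h2⟩, ⟨x, hx, h1⟩⟩ := hm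
    rw [Finset.HasAntidiagonal.mem_antidiagonal] at hn
    simp only at hn h1 h2
    refine ⟨(x, y), ?_, ?_⟩
    · rw [hS]
      refine ⟨hx, hy, ?_⟩
      rw [← hn]
      linear_combination rb * h1 + ra * h2
    · simp only [h1, h2, Nat.add_sub_cancel]
      rw [Nat.mul_div_cancel_left _ hra, Nat.mul_div_cancel_left _ hrb]

theorem sq_eq_expand (f : PowerSeries (ZMod 2)) :
    f ^ 2 = PowerSeries.expand 2 (by norm_num) f := by
  have := MvPowerSeries.map_frobenius_expand (R := ZMod 2) (σ := Unit) 2 (by norm_num) (f := f)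
  rw [ZMod.frobenius_zmod] at this
  rw [MvPowerSeries.map_id] at this
  exact this.symm


theorem sq24 (x : ℕ) (h : x % 2 = 1 ∧ x % 3 ≠ 0) : ∃ i, x ^ 2 = 24 * i + 1 := by
  refine ⟨x ^ 2 / 24, ?_⟩
  have : x ^ 2 % 24 = 1 := by
    rw [Nat.pow_mod]
    have h1 : x % 24 < 24 := Nat.mod_lt _ (by norm_num)
    have h2 : (x % 24) % 2 = 1 := by omega
    have h3 : (x % 24) % 3 ≠ 0 := by omega
    generalize x % 24 = t at *
    interval_cases t <;> simp_all
  omega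

theorem sq8 (x : ℕ) (h : x % 2 = 1) : ∃ i, x ^ 2 = 8 * i + 1 := by
  refine ⟨x ^ 2 / 8, ?_⟩
  have : x ^ 2 % 8 = 1 := by
    rw [Nat.pow_mod]
    have h1 : x % 8 < 8 := Nat.mod_lt _ (by norm_num)
    have h2 : (x % 8) % 2 = 1 := by omega
    generalize x % 8 = t at *
    interval_cases t <;> simp_all
  omega

theorem sq3 (x : ℕ) (h : x % 3 ≠ 0) : ∃ i, x ^ 2 = 3 * i + 1 := by
  refine ⟨x ^ 2 / 3, ?_⟩
  have : x ^ 2 % 3 = 1 := by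
    rw [Nat.pow_mod]
    have h1 : x % 3 < 3 := Nat.mod_lt _ (by norm_num)
    generalize x % 3 = t at *
    interval_cases t <;> simp_all
  omega

theorem odd_of_sq {x : ℕ} (h : x ^ 2 % 2 = 1) : x % 2 = 1 := by
  rcases Nat.mod_two_eq_zero_or_one x with h0 | h0
  · rw [Nat.pow_mod, h0] at h; simp at h
  · exact h0

/-- Euler product modulo 2 -/
noncomputable def serP : PowerSeries (ZMod 2) := theta 24 1 (fun x => x % 2 = 1 ∧ x % 3 ≠ 0)
/-- triangular number series modulo 2 -/
noncomputable def serPsi : PowerSeries (ZMod 2) := theta 8 1 (fun x => x % 2 = 1)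
/-- squares prime to three -/
noncomputable def serG : PowerSeries (ZMod 2) := theta 3 1 (fun x => x % 3 ≠ 0)

open PowerSeries

theorem id1 : serP * expand 2 (by norm_num) serP = serPsi := by
  classical
  ext n
  have e0 : ∀ g, coeff n (serP * g) = coeff n (expand 1 one_ne_zero serP * g) := fun g => by
    rw [expand_one_apply]
  rw [e0]
  rw [serP, coeff_theta_mul 24 1 24 1 _ _ (by norm_num) (by norm_num) sq24 sq24 1 2 one_ne_zero
    (by norm_num) n (pairSet 2 (3 * (8 * n + 1)) (fun x y => x % 3 ≠ 0 ∧ y % 3 ≠ 0)),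
    par1 _ (by omega), serPsi, theta, coeff_mk]
  · congr 1
    rw [eq_iff_iff]
    constructor
    · rintro (⟨z, hz⟩ | ⟨z, hz⟩)
      · exact ⟨z, odd_of_sq (by omega), hz⟩
      · exfalso
        have : z % 2 = 1 := odd_of_sq (by omega)
        obtain ⟨i, hi⟩ := sq8 z this
        omega
    · rintro ⟨z, -, hz⟩
      exact Or.inl ⟨z, hz⟩
  · intro x y
    rw [mem_pairSet (by norm_num)]
    constructor
    · rintro ⟨h, h1, h2⟩
      have hx : x % 2 = 1 := odd_of_sq (by omega)
      obtain ⟨i, hi⟩ := sq8 x hx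
      have hy : y % 2 = 1 := odd_of_sq (by omega)
      exact ⟨⟨hx, h1⟩, ⟨hy, h2⟩, by omega⟩
    · rintro ⟨h1, h2, h⟩
      exact ⟨by omega, h1.2, h2.2⟩

theorem id2 : serPsi * expand 3 (by norm_num) serPsi =
    expand 4 (by norm_num) serPsi + X * expand 12 (by norm_num) serPsi := by
  classical
  ext n
  have e0 : ∀ g, coeff n (serPsi * g) = coeff n (expand 1 one_ne_zero serPsi * g) := fun g => by
    rw [expand_one_apply]
  rw [e0]
  have e1 : coeff n (X * expand 12 (by norm_num) serPsi) =
      if ∃ z, 3 * z ^ 2 = 2 * n + 1 then 1 else 0 := by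
    rcases n with _ | n
    · rw [coeff_zero_X_mul, if_neg]
      rintro ⟨z, hz⟩; omega
    · rw [coeff_succ_X_mul, serPsi, coeff_expand_theta 8 1 _ (by norm_num) sq8]
      congr 1
      rw [eq_iff_iff]
      constructor
      · rintro ⟨z, -, hz⟩; exact ⟨z, by omega⟩
      · rintro ⟨z, hz⟩; exact ⟨z, odd_of_sq (by omega), by omega⟩
  have e2 : coeff n (expand 4 (by norm_num) serPsi) =
      if ∃ z, z ^ 2 = 2 * n + 1 then 1 else 0 := by
    rw [serPsi, coeff_expand_theta 8 1 _ (by norm_num) sq8]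
    congr 1
    rw [eq_iff_iff]
    constructor
    · rintro ⟨z, -, hz⟩; exact ⟨z, by omega⟩
    · rintro ⟨z, hz⟩; exact ⟨z, odd_of_sq (by omega), by omega⟩
  rw [map_add, e1, e2, serPsi, coeff_theta_mul 8 1 8 1 _ _ (by norm_num) (by norm_num) sq8 sq8 1 3
    one_ne_zero (by norm_num) n (pairSet 3 (4 * (2 * n + 1)) (fun x y => x % 2 = 1 ∧ y % 2 = 1)),
    par2 _ (by omega)]
  · by_cases hq : ∃ z, z ^ 2 = 2 * n + 1
    · have hr : ¬ ∃ z, 3 * z ^ 2 = 2 * n + 1 := by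
        rintro ⟨w, hw⟩
        obtain ⟨z, hz⟩ := hq
        exact irr3 z w (odd_of_sq (by omega)) (by omega)
      simp [hq, hr]
    · simp [hq]
  · intro x y
    rw [mem_pairSet (by norm_num)]
    constructor
    · rintro ⟨h, h1, h2⟩
      exact ⟨h1, h2, by omega⟩
    · rintro ⟨h1, h2, h⟩
      exact ⟨by omega, h1, h2⟩

theorem id3 (m : ℕ) : coeff (4 * m + 1) (serPsi * expand 21 (by norm_num) serP) =
    coeff m (expand 12 (by norm_num) serP) := by
  classical
  rw [← expand_one_apply serPsi]
  rw [serPsi, serP, coeff_theta_mul 8 1 24 1 _ _ (by norm_num) (by norm_num) sq8 sq24 1 21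
    one_ne_zero (by norm_num) _
    (pairSet 7 (16 * (2 * m + 1)) (fun x y => x % 2 = 1 ∧ y % 2 = 1 ∧ y % 3 ≠ 0)),
    par3 _ (by omega), coeff_expand_theta 24 1 _ (by norm_num) sq24]
  · congr 1
    rw [eq_iff_iff]
    constructor
    · rintro ⟨z, hz, h3⟩; exact ⟨z, ⟨odd_of_sq (by omega), h3⟩, by omega⟩
    · rintro ⟨z, h3, hz⟩; exact ⟨z, by omega, h3.2⟩
  · intro x y
    rw [mem_pairSet (by norm_num)]
    constructor
    · rintro ⟨h, h1, h2⟩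
      exact ⟨h1, h2, by omega⟩
    · rintro ⟨h1, h2, h⟩
      exact ⟨by omega, h1, h2⟩

/-- The section of a series at exponents `4n+1`. -/
noncomputable def sec (f : PowerSeries (ZMod 2)) : PowerSeries (ZMod 2) :=
  PowerSeries.mk fun n => coeff (4 * n + 1) f

theorem sec_mul (f g : PowerSeries (ZMod 2)) :
    sec (f * expand 4 (by norm_num) g) = sec f * g := by
  ext n
  rw [sec, coeff_mk, coeff_mul, coeff_mul]
  symm
  apply Finset.sum_of_injOn (fun p => (4 * p.1 + 1, 4 * p.2))
  · rintro ⟨a, b⟩ _ ⟨c, d⟩ _ h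
    simp only [Prod.mk.injEq] at h ⊢
    omega
  · rintro ⟨a, b⟩ h
    simp only [Finset.mem_coe, Finset.HasAntidiagonal.mem_antidiagonal] at h ⊢
    omega
  · rintro ⟨a, b⟩ h h'
    have hd : ¬ 4 ∣ b := by
      rintro ⟨c, rfl⟩
      apply h'
      rw [Finset.HasAntidiagonal.mem_antidiagonal] at h
      refine ⟨(a / 4, c), ?_, ?_⟩
      · simp only [Finset.mem_coe, Finset.HasAntidiagonal.mem_antidiagonal]
        simp only at h
        omega
      · simp only [Prod.mk.injEq, and_true]
        simp only at h
        omega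
    simp only
    rw [coeff_expand_of_not_dvd _ _ _ hd, mul_zero]
  · rintro ⟨a, b⟩ _
    simp only
    rw [coeff_expand_mul, sec, coeff_mk]

theorem serG_eq : serG = expand 8 (by norm_num) serP + X * expand 4 (by norm_num) serG := by
  classical
  ext n
  have e1 : coeff n (X * expand 4 (by norm_num) serG) =
      if ∃ z, z % 3 ≠ 0 ∧ z % 2 = 0 ∧ z ^ 2 = 3 * n + 1 then 1 else 0 := by
    rcases n with _ | n
    · rw [coeff_zero_X_mul, if_neg]
      rintro ⟨z, h3, h2, hz⟩
      have : z = 1 := by nlinarith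
      omega
    · rw [coeff_succ_X_mul, serG, coeff_expand_theta 3 1 _ (by norm_num) sq3]
      congr 1
      rw [eq_iff_iff]
      constructor
      · rintro ⟨z, h3, hz⟩; exact ⟨2 * z, by omega, by omega, by rw [mul_pow]; omega⟩
      · rintro ⟨z, h3, h2, hz⟩
        obtain ⟨w, rfl⟩ := Nat.dvd_of_mod_eq_zero h2
        exact ⟨w, by omega, by rw [mul_pow] at hz; omega⟩
  have e2 : coeff n (expand 8 (by norm_num) serP) =
      if ∃ z, z % 3 ≠ 0 ∧ z % 2 = 1 ∧ z ^ 2 = 3 * n + 1 then 1 else 0 := by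
    rw [serP, coeff_expand_theta 24 1 _ (by norm_num) sq24]
    congr 1
    rw [eq_iff_iff]
    constructor
    · rintro ⟨z, h, hz⟩; exact ⟨z, h.2, h.1, by omega⟩
    · rintro ⟨z, h3, h2, hz⟩; exact ⟨z, ⟨h2, h3⟩, by omega⟩
  rw [map_add, e1, e2, serG, theta, coeff_mk]
  by_cases hq : ∃ x, x % 3 ≠ 0 ∧ x ^ 2 = 3 * n + 1
  · obtain ⟨x, h3, hx⟩ := hq
    have uni : ∀ z, z ^ 2 = 3 * n + 1 → z = x := fun z hz =>
      Nat.pow_left_injective (n := 2) (by norm_num) (hz.trans hx.symm)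
    rw [if_pos ⟨x, h3, hx⟩]
    rcases Nat.mod_two_eq_zero_or_one x with h2 | h2
    · rw [if_neg, if_pos ⟨x, h3, h2, hx⟩, zero_add]
      rintro ⟨z, _, hz2, hz⟩
      rw [uni z hz] at hz2; omega
    · rw [if_pos ⟨x, h3, h2, hx⟩, if_neg, add_zero]
      rintro ⟨z, _, hz2, hz⟩
      rw [uni z hz] at hz2; omega
  · rw [if_neg hq, if_neg, if_neg, add_zero]
    · rintro ⟨z, h3, _, hz⟩; exact hq ⟨z, h3, hz⟩
    · rintro ⟨z, h3, _, hz⟩; exact hq ⟨z, h3, hz⟩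

theorem eq_zero_of_rec (D : PowerSeries (ZMod 2)) (h : D = X * expand 4 (by norm_num) D) :
    D = 0 := by
  ext n
  induction n using Nat.strong_induction_on with
  | _ n ih =>
  rw [h]
  rcases n with _ | n
  · rw [coeff_zero_X_mul, map_zero]
  · rw [coeff_succ_X_mul, coeff_expand]
    split_ifs
    · rw [ih _ (by omega)]; simp
    · simp

theorem expand_expand (a b c : ℕ) (ha : a ≠ 0) (hb : b ≠ 0) (hc : c ≠ 0) (h : a * b = c)
    (f : PowerSeries (ZMod 2)) : expand a ha (expand b hb f) = expand c hc f := by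
  subst h
  rw [expand_mul]

theorem serP_ne : serP ≠ 0 := by
  classical
  intro h
  have := congrArg (coeff 0) h
  rw [serP, theta, coeff_mk, if_pos ⟨1, by norm_num⟩, map_zero] at this
  exact one_ne_zero this

theorem serP_const : constantCoeff serP = 1 := by
  classical
  rw [← coeff_zero_eq_constantCoeff_apply, serP, theta, coeff_mk, if_pos ⟨1, by norm_num⟩]

theorem four_mul : expand 4 (by norm_num) serP = serP * serPsi := by
  rw [← expand_expand 2 2 4 (by norm_num) (by norm_num) (by norm_num) rfl, ← sq_eq_expand,
    ← sq_eq_expand, ← id1, ← sq_eq_expand]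
  ring

theorem serG_mul : serG * serP = expand 3 (by norm_num) serPsi := by
  obtain ⟨F, hF⟩ : ∃ F, F * serP = expand 3 (by norm_num) serPsi :=
    ⟨expand 3 (by norm_num) serPsi * serP⁻¹, by
      rw [mul_assoc, PowerSeries.inv_mul_cancel _ (by rw [serP_const]; exact one_ne_zero), mul_one]⟩
  have h4ne : expand 4 (by norm_num) serP ≠ 0 := by
    intro h
    have := congrArg constantCoeff h
    rw [constantCoeff_expand, serP_const, map_zero] at this
    exact one_ne_zero this
  have hF4 := congrArg (expand 4 (by norm_num)) hF
  rw [map_mul, expand_expand 4 3 12 _ _ (by norm_num) rfl] at hF4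
  have h8 : expand 4 (by norm_num) serPsi =
      expand 4 (by norm_num) serP * expand 8 (by norm_num) serP := by
    rw [← id1, map_mul, expand_expand 4 2 8 _ _ (by norm_num) rfl]
  have hrec : F = expand 8 (by norm_num) serP + X * expand 4 (by norm_num) F := by
    apply mul_right_cancel₀ h4ne
    have e : F * expand 4 (by norm_num) serP = serPsi * expand 3 (by norm_num) serPsi := by
      rw [four_mul, ← hF]; ring
    rw [e, id2, h8, ← hF4]; ring
  have hD : F - serG = 0 := by
    apply eq_zero_of_rec
    rw [map_sub]
    linear_combination hrec - serG_eq
  rw [← sub_eq_zero.mp hD, hF]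

theorem sec_b21 : sec (PowerSeries.mk fun n => (b21 n : ZMod 2)) =
    expand 3 (by norm_num) serP * serG := by
  have h := b21_gf
  rw [pent_eq, ← serP] at h
  apply mul_right_cancel₀ serP_ne
  rw [← sec_mul, four_mul, ← mul_assoc, h, mul_comm, mul_assoc, serG_mul, ← map_mul, ← four_mul,
    expand_expand 3 4 12 _ _ (by norm_num) rfl]
  ext m
  rw [sec, coeff_mk, id3]

theorem b21_parity (n : ℕ) : (b21 (4 * n + 1) : ZMod 2) = ((repSet (24 * n + 11)).card : ZMod 2) := by
  have h := congrArg (coeff n) sec_b21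
  rw [sec, coeff_mk, coeff_mk, ← expand_one_apply serG] at h
  rw [h, serP, serG, coeff_theta_mul 24 1 3 1 _ _ (by norm_num) (by norm_num) sq24 sq3 3 1
    (by norm_num) one_ne_zero _ (repSet (24 * n + 11))]
  intro x y
  rw [mem_repSet]
  simp only
  constructor
  · rintro ⟨h, h3⟩
    refine ⟨⟨odd_of_sq (by omega), by omega⟩, ?_, by omega⟩
    intro hy
    obtain ⟨w, rfl⟩ := Nat.dvd_of_mod_eq_zero hy
    rw [mul_pow] at h
    omega
  · rintro ⟨h1, h2, h⟩
    exact ⟨by omega, by omega⟩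

theorem stmt_4 (p : ℕ) (hp : p.Prime) (hp5 : 5 ≤ p) (hp11 : p ≠ 11)
    (h : Even (b21 ((11 * p ^ 2 - 5) / 6))) (k : ℕ) :
    Odd (b21 ((11 * p ^ (6 * k) - 5) / 6)) := by
  have hpar := repSet_parity p hp hp5 hp11 k
  have h2 : p % 2 = 1 := by
    rcases hp.eq_two_or_odd with h | h
    · omega
    · exact h
  have h3 : p % 3 ≠ 0 := by
    intro h
    have := (Nat.prime_dvd_prime_iff_eq Nat.prime_three hp).mp (Nat.dvd_of_mod_eq_zero h)
    omega
  obtain ⟨i, hi⟩ := sq24 p ⟨h2, h3⟩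
  have hmod : p ^ (6 * k) % 24 = 1 := by
    rw [show 6 * k = 2 * (3 * k) by ring, pow_mul, Nat.pow_mod, hi]
    simp [Nat.add_mod]
  obtain ⟨j, hj⟩ : ∃ j, p ^ (6 * k) = 24 * j + 1 := ⟨p ^ (6 * k) / 24, by omega⟩
  rw [hj] at hpar ⊢
  have e1 : (11 * (24 * j + 1) - 5) / 6 = 4 * (11 * j) + 1 := by omega
  have e2 : 11 * (24 * j + 1) = 24 * (11 * j) + 11 := by ring
  rw [e2] at hpar
  rw [e1, ← ZMod.natCast_eq_one_iff_odd, b21_parity, ZMod.natCast_eq_one_iff_odd, Nat.odd_iff]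
  exact hpar
end

section
/- Let p be an odd prime and let j ∈ {1, 4, 8} be such that 8x^2 + 27y^2 = jp has a primitive solution. Let m be a positive integer such that p ∤ m and pm ≡ 11 (mod 24). Then the set U = {(u, v) ∈ ℤ² : 8u^2 + 27v^2 = pm and gcd(u, v) = 1} and the set A = {(a, b) ∈ ℤ² : a^2 + 216b^2 = jm and gcd(a, b) = 1} satisfy |U| = 2|A|. -/
theorem even_of_sq_eq (c y k : ℤ) (hc : Odd c) (h : c * y ^ 2 = 2 * k) : ∃ z, y = 2 * z := by
  have h1 : Even (c * y ^ 2) := ⟨k, by rw [h]; ring⟩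
  rcases Int.even_mul.1 h1 with h2 | h2
  · exact absurd hc (Int.not_odd_iff_even.2 h2)
  · obtain ⟨z, hz⟩ := (Int.even_pow.1 h2).1
    exact ⟨z, by rw [hz]; ring⟩

theorem odd_of_gcd (x z : ℤ) (h : Int.gcd x (2 * z) = 1) : Odd x := by
  by_contra hx
  rw [Int.not_odd_iff_even] at hx
  have h2 : (2 : ℤ) ∣ (Int.gcd x (2 * z) : ℤ) := Int.dvd_coe_gcd hx.two_dvd ⟨z, rfl⟩
  rw [h] at h2
  norm_num at h2

theorem odd_sq_eight (x : ℤ) (h : Odd x) : ∃ k, x ^ 2 = 8 * k + 1 := by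
  have := Int.sq_mod_four_eq_one_of_odd h
  obtain ⟨k, rfl⟩ := h
  obtain ⟨l, hl⟩ := Int.even_mul_succ_self k
  exact ⟨l, by linear_combination 4 * hl⟩

theorem div_key (j p m x y a b : ℤ) (hj : j = 1 ∨ j = 4 ∨ j = 8)
    (hp : Odd p) (hm : Odd m) (hpm : (p * m) % 8 = 3)
    (h1 : 8 * x ^ 2 + 27 * y ^ 2 = j * p) (g1 : Int.gcd x y = 1)
    (h2 : a ^ 2 + 216 * b ^ 2 = j * m) (g2 : Int.gcd a b = 1) :
    j ∣ x * a + 27 * y * b ∧ j ∣ y * a - 8 * x * b := by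
  rcases hj with rfl | rfl | rfl
  · simp
  · obtain ⟨y, rfl⟩ := even_of_sq_eq 27 y (2 * p - 4 * x ^ 2) (by decide) (by linarith)
    obtain ⟨a, rfl⟩ := even_of_sq_eq 1 a (2 * m - 108 * b ^ 2) (by decide) (by linarith)
    have hx := odd_of_gcd _ _ g1
    rw [Int.gcd_comm] at g2
    have hb := odd_of_gcd _ _ g2
    have h1' : 2 * x ^ 2 + 27 * y ^ 2 = p := by linarith
    have h2' : a ^ 2 + 54 * b ^ 2 = m := by linarith
    have hy : Odd y := by
      rw [← h1'] at hp
      by_contra hy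
      rw [Int.not_odd_iff_even] at hy
      rw [← Int.not_even_iff_odd] at hp
      exact hp (Even.add ⟨x ^ 2, by ring⟩ (by simp [hy, parity_simps]))
    have ha : Odd a := by
      rw [← h2'] at hm
      by_contra hy
      rw [Int.not_odd_iff_even] at hy
      rw [← Int.not_even_iff_odd] at hm
      exact hm (Even.add (by simp [hy, parity_simps]) (by exact ⟨27 * b ^ 2, by ring⟩))
    obtain ⟨x, rfl⟩ := hx
    obtain ⟨y, rfl⟩ := hy
    obtain ⟨a, rfl⟩ := ha
    obtain ⟨b, rfl⟩ := hb
    exact ⟨⟨2 * x * a + x + a + 27 * (2 * y * b + y + b) + 14, by ring⟩,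
      ⟨(2 * y + 1) * (2 * a + 1) - 2 * (2 * x + 1) * (2 * b + 1), by ring⟩⟩
  · obtain ⟨y, rfl⟩ := even_of_sq_eq 27 y (4 * p - 4 * x ^ 2) (by decide) (by linarith)
    obtain ⟨y, rfl⟩ := even_of_sq_eq 27 y (p - x ^ 2) (by decide) (by linarith)
    obtain ⟨a, rfl⟩ := even_of_sq_eq 1 a (4 * m - 108 * b ^ 2) (by decide) (by linarith)
    obtain ⟨a, rfl⟩ := even_of_sq_eq 1 a (m - 27 * b ^ 2) (by decide) (by linarith)
    have hx := odd_of_gcd _ _ g1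
    rw [Int.gcd_comm] at g2
    have hb := odd_of_gcd _ _ g2
    have h1' : x ^ 2 + 54 * y ^ 2 = p := by linarith
    have h2' : 2 * a ^ 2 + 27 * b ^ 2 = m := by linarith
    have key : Even (a + y) := by
      obtain ⟨k, hk⟩ := odd_sq_eight x hx
      obtain ⟨l, hl⟩ := odd_sq_eight b hb
      rw [hk] at h1'
      rw [hl] at h2'
      rcases Int.even_or_odd a with ha | ha <;> rcases Int.even_or_odd y with hy | hy
      · exact ha.add hy
      · exfalso
        obtain ⟨s, hs⟩ := odd_sq_eight y hy
        obtain ⟨t, rfl⟩ := ha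
        have : p * m = 8 * ((k + 54 * s + 6) * m + 7 * (t ^ 2 + 27 * l + 3)) + 21 := by
          rw [← h1', ← h2', hs]; ring
        omega
      · exfalso
        obtain ⟨s, hs⟩ := odd_sq_eight a ha
        obtain ⟨t, rfl⟩ := hy
        have : p * m = 8 * ((k + 27 * t ^ 2) * m + (2 * s + 27 * l + 3)) + 5 := by
          rw [← h1', ← h2', hs]; ring
        omega
      · exact ha.add_odd hy
    obtain ⟨t, ht⟩ := key
    obtain ⟨x, rfl⟩ := hx
    obtain ⟨b, rfl⟩ := hb
    obtain rfl : a = 2 * t - y := by linarith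
    exact ⟨⟨t + x * (2 * t - y) + 27 * y * b + 13 * y, by ring⟩,
      ⟨2 * y * (2 * t - y) - (2 * x + 1) * (2 * b + 1), by ring⟩⟩

theorem stmt_13 (p : ℕ) (hp : p.Prime) (hodd : Odd p)
    (j : ℤ) (hj : j ∈ ({1, 4, 8} : Set ℤ))
    (hsol : ∃ x y : ℤ, 8 * x ^ 2 + 27 * y ^ 2 = j * p ∧ Int.gcd x y = 1)
    (m : ℕ) (hm : 0 < m) (hpm : ¬ p ∣ m) (hmod : (p * m) % 24 = 11) :
    {q : ℤ × ℤ | 8 * q.1 ^ 2 + 27 * q.2 ^ 2 = (p : ℤ) * m ∧ Int.gcd q.1 q.2 = 1}.ncard =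
      2 * {q : ℤ × ℤ | q.1 ^ 2 + 216 * q.2 ^ 2 = j * m ∧ Int.gcd q.1 q.2 = 1}.ncard := by
  obtain ⟨x, y, hxy, gxy⟩ := hsol
  have hj' : j = 1 ∨ j = 4 ∨ j = 8 := by simpa using hj
  have hj0 : j ≠ 0 := by rcases hj' with h | h | h <;> simp [h]
  have hP : Prime (p : ℤ) := Nat.prime_iff_prime_int.1 hp
  have hp0 : (p : ℤ) ≠ 0 := hP.ne_zero
  have hpm' : ¬ (p : ℤ) ∣ m := by exact_mod_cast hpm
  have hoddZ : Odd (p : ℤ) := by exact_mod_cast hodd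
  have hp2 : ¬ (p : ℤ) ∣ 2 := by
    intro h
    have h' : p ∣ 2 := by exact_mod_cast h
    rw [(Nat.prime_dvd_prime_iff_eq hp Nat.prime_two).1 h'] at hodd
    exact absurd hodd (by decide)
  have hp8 : ¬ (p : ℤ) ∣ 8 := by
    intro h
    exact hp2 (hP.dvd_of_dvd_pow (show (p : ℤ) ∣ 2 ^ 3 by norm_num; exact h))
  have hmoddN : Odd (p * m) := by rw [Nat.odd_iff]; omega
  have hmodd : Odd (m : ℤ) := by exact_mod_cast (Nat.odd_mul.1 hmoddN).2
  have hpm8 : ((p : ℤ) * m) % 8 = 3 := by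
    have : (p * m) % 8 = 3 := by omega
    exact_mod_cast this
  have hp3 : ¬ (p : ℤ) ∣ 27 := by
    intro h
    have h3 : (p : ℤ) ∣ 3 := hP.dvd_of_dvd_pow (show (p : ℤ) ∣ 3 ^ 3 by norm_num; exact h)
    have h' : p ∣ 3 := by exact_mod_cast h3
    rw [(Nat.prime_dvd_prime_iff_eq hp Nat.prime_three).1 h'] at hmod
    omega
  have dvd_one : ∀ {s t d : ℤ}, Int.gcd s t = 1 → d ∣ s → d ∣ t → d ∣ 1 := by
    intro s t d h h1 h2
    have := Int.dvd_coe_gcd h1 h2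
    rwa [h] at this
  have hpx : ¬ (p : ℤ) ∣ x := by
    intro h
    have h1 : (p : ℤ) ∣ 27 * y ^ 2 := by
      have : 27 * y ^ 2 = j * p - x * (8 * x) := by linarith
      rw [this]
      exact dvd_sub (dvd_mul_left _ _) (dvd_mul_of_dvd_left h _)
    have h2 := hP.dvd_of_dvd_pow ((hP.dvd_or_dvd h1).resolve_left hp3)
    exact hP.not_dvd_one (dvd_one gxy h h2)
  have hpy : ¬ (p : ℤ) ∣ y := by
    intro h
    have h1 : (p : ℤ) ∣ 8 * x ^ 2 := by
      have : 8 * x ^ 2 = j * p - y * (27 * y) := by linarith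
      rw [this]
      exact dvd_sub (dvd_mul_left _ _) (dvd_mul_of_dvd_left h _)
    exact hpx (hP.dvd_of_dvd_pow ((hP.dvd_or_dvd h1).resolve_left hp8))
  set U := {q : ℤ × ℤ | 8 * q.1 ^ 2 + 27 * q.2 ^ 2 = (p : ℤ) * m ∧ Int.gcd q.1 q.2 = 1} with hU
  set A := {q : ℤ × ℤ | q.1 ^ 2 + 216 * q.2 ^ 2 = j * m ∧ Int.gcd q.1 q.2 = 1} with hA
  let U1 := {q : ℤ × ℤ | q ∈ U ∧ (p : ℤ) ∣ y * q.1 - x * q.2}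
  let U2 := {q : ℤ × ℤ | q ∈ U ∧ (p : ℤ) ∣ y * q.1 + x * q.2}
  have hfin : U.Finite := by
    apply (Set.finite_Icc ((-((p : ℤ) * m), -((p : ℤ) * m)) : ℤ × ℤ)
      ((p : ℤ) * m, (p : ℤ) * m)).subset
    rintro ⟨u, v⟩ ⟨h, -⟩
    simp only at h
    have hu : |u| ≤ u ^ 2 := by rw [← sq_abs]; exact Int.le_self_sq _
    have hv : |v| ≤ v ^ 2 := by rw [← sq_abs]; exact Int.le_self_sq _
    have hu1 := abs_le.1 (show |u| ≤ (p : ℤ) * m by nlinarith [sq_nonneg u, sq_nonneg v])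
    have hv1 := abs_le.1 (show |v| ≤ (p : ℤ) * m by nlinarith [sq_nonneg u, sq_nonneg v])
    exact ⟨⟨hu1.1, hv1.1⟩, ⟨hu1.2, hv1.2⟩⟩
  have hunion : U = U1 ∪ U2 := by
    ext ⟨u, v⟩
    constructor
    · intro h
      have h1 : 8 * u ^ 2 + 27 * v ^ 2 = (p : ℤ) * m := h.1
      have h2 : (p : ℤ) ∣ 8 * ((y * u - x * v) * (y * u + x * v)) :=
        ⟨y ^ 2 * m - j * v ^ 2, by linear_combination y ^ 2 * h1 - v ^ 2 * hxy⟩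
      rcases hP.dvd_or_dvd ((hP.dvd_or_dvd h2).resolve_left hp8) with h3 | h3
      · exact Or.inl ⟨h, h3⟩
      · exact Or.inr ⟨h, h3⟩
    · rintro (h | h) <;> exact h.1
  have hdisj : Disjoint U1 U2 := by
    rw [Set.disjoint_left]
    rintro ⟨u, v⟩ ⟨h, h1⟩ ⟨-, h2⟩
    simp only at h1 h2
    have h3 : (p : ℤ) ∣ 2 * (y * u) := by
      have := dvd_add h1 h2
      ring_nf at this ⊢
      exact this
    have h4 : (p : ℤ) ∣ 2 * (x * v) := by
      have := dvd_sub h2 h1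
      ring_nf at this ⊢
      exact this
    have h5 := (hP.dvd_or_dvd ((hP.dvd_or_dvd h3).resolve_left hp2)).resolve_left hpy
    have h6 := (hP.dvd_or_dvd ((hP.dvd_or_dvd h4).resolve_left hp2)).resolve_left hpx
    exact hP.not_dvd_one (dvd_one h.2 h5 h6)
  have hU12 : U1.ncard = U2.ncard := by
    apply Set.ncard_congr (fun q _ => (q.1, -q.2))
    · rintro ⟨u, v⟩ ⟨⟨h1, h2⟩, h3⟩
      refine ⟨⟨by simpa using h1, by simpa using h2⟩, ?_⟩
      simpa [sub_eq_add_neg] using h3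
    · rintro ⟨u, v⟩ ⟨u', v'⟩ - - h
      simpa using h
    · rintro ⟨u, v⟩ ⟨⟨h1, h2⟩, h3⟩
      refine ⟨(u, -v), ⟨⟨by simpa using h1, by simpa using h2⟩, ?_⟩, by simp⟩
      simpa [sub_eq_add_neg] using h3
  have hAU : A.ncard = U1.ncard := by
    have hdiv : ∀ q ∈ A, j * ((x * q.1 + 27 * y * q.2) / j) = x * q.1 + 27 * y * q.2 ∧
        j * ((y * q.1 - 8 * x * q.2) / j) = y * q.1 - 8 * x * q.2 := by
      rintro ⟨a, b⟩ ⟨h1, h2⟩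
      obtain ⟨k1, k2⟩ := div_key j p m x y a b hj' hoddZ hmodd hpm8 hxy gxy h1 h2
      exact ⟨Int.mul_ediv_cancel' k1, Int.mul_ediv_cancel' k2⟩
    have hback : ∀ a b u v : ℤ, j * u = x * a + 27 * y * b → j * v = y * a - 8 * x * b →
        p * a = 8 * x * u + 27 * y * v ∧ p * b = y * u - x * v := by
      intro a b u v h1 h2
      constructor
      · apply mul_left_cancel₀ hj0
        linear_combination -a * hxy - 8 * x * h1 - 27 * y * h2
      · apply mul_left_cancel₀ hj0
        linear_combination -b * hxy - y * h1 + x * h2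
    apply Set.ncard_congr (fun q _ =>
      ((x * q.1 + 27 * y * q.2) / j, (y * q.1 - 8 * x * q.2) / j))
    · rintro ⟨a, b⟩ h
      obtain ⟨e1, e2⟩ := hdiv _ h
      simp only at e1 e2 ⊢
      generalize (x * a + 27 * y * b) / j = u at *
      generalize (y * a - 8 * x * b) / j = v at *
      obtain ⟨f1, f2⟩ := hback a b u v e1 e2
      have h1 : a ^ 2 + 216 * b ^ 2 = j * m := h.1
      have hn : 8 * u ^ 2 + 27 * v ^ 2 = (p : ℤ) * m := by
        apply mul_left_cancel₀ (pow_ne_zero 2 hj0)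
        have : j ^ 2 * (8 * u ^ 2 + 27 * v ^ 2) = 8 * (j * u) ^ 2 + 27 * (j * v) ^ 2 := by ring
        rw [this, e1, e2]
        linear_combination (a ^ 2 + 216 * b ^ 2) * hxy + j * p * h1
      refine ⟨⟨hn, ?_⟩, ⟨b, f2.symm⟩⟩
      show Int.gcd u v = 1
      by_contra hg
      obtain ⟨q, hq, hqg⟩ := Nat.exists_prime_and_dvd hg
      have hQ : Prime (q : ℤ) := Nat.prime_iff_prime_int.1 hq
      have hqu : (q : ℤ) ∣ u := (Int.natCast_dvd_natCast.2 hqg).trans (Int.gcd_dvd_left ..)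
      have hqv : (q : ℤ) ∣ v := (Int.natCast_dvd_natCast.2 hqg).trans (Int.gcd_dvd_right ..)
      have hqp : (q : ℤ) ∣ p := by
        by_contra hqp
        have h5 : (q : ℤ) ∣ p * a := by
          rw [f1]; exact dvd_add (dvd_mul_of_dvd_right hqu _) (dvd_mul_of_dvd_right hqv _)
        have h6 : (q : ℤ) ∣ p * b := by
          rw [f2]; exact dvd_sub (dvd_mul_of_dvd_right hqu _) (dvd_mul_of_dvd_right hqv _)
        exact hQ.not_dvd_one (dvd_one h.2 ((hQ.dvd_or_dvd h5).resolve_left hqp)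
          ((hQ.dvd_or_dvd h6).resolve_left hqp))
      have hqp' : q = p := (Nat.prime_dvd_prime_iff_eq hq hp).1 (by exact_mod_cast hqp)
      subst hqp'
      obtain ⟨s, rfl⟩ := hqu
      obtain ⟨t, rfl⟩ := hqv
      apply hpm'
      refine ⟨8 * s ^ 2 + 27 * t ^ 2, ?_⟩
      apply mul_left_cancel₀ hp0
      linear_combination -hn
    · rintro ⟨a, b⟩ ⟨a', b'⟩ h h' he
      obtain ⟨e1, e2⟩ := hdiv _ h
      obtain ⟨e1', e2'⟩ := hdiv _ h'
      simp only [Prod.mk.injEq] at e1 e2 e1' e2' he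
      rw [← he.1] at e1'
      rw [← he.2] at e2'
      obtain ⟨f1, f2⟩ := hback a b _ _ e1 e2
      obtain ⟨f1', f2'⟩ := hback a' b' _ _ e1' e2'
      rw [mul_left_cancel₀ hp0 (f1.trans f1'.symm), mul_left_cancel₀ hp0 (f2.trans f2'.symm)]
    · rintro ⟨u, v⟩ ⟨⟨h1, h2⟩, ⟨b, hb⟩⟩
      simp only at h1 h2 hb
      have h3 : (p : ℤ) ∣ y * (8 * x * u + 27 * y * v) :=
        ⟨8 * x * b + j * v, by linear_combination 8 * x * hb + v * hxy⟩
      obtain ⟨a, ha⟩ := (hP.dvd_or_dvd h3).resolve_left hpy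
      have k1 : x * a + 27 * y * b = j * u := by
        apply mul_left_cancel₀ hp0
        linear_combination -x * ha - 27 * y * hb + u * hxy
      have k2 : y * a - 8 * x * b = j * v := by
        apply mul_left_cancel₀ hp0
        linear_combination -y * ha + 8 * x * hb + v * hxy
      have hn : a ^ 2 + 216 * b ^ 2 = j * m := by
        apply mul_left_cancel₀ (pow_ne_zero 2 hp0)
        have : (p : ℤ) ^ 2 * (a ^ 2 + 216 * b ^ 2) = (p * a) ^ 2 + 216 * (p * b) ^ 2 := by ring
        rw [this, ← ha, ← hb]
        linear_combination (8 * u ^ 2 + 27 * v ^ 2) * hxy + j * p * h1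
      refine ⟨(a, b), ⟨hn, ?_⟩, ?_⟩
      · show Int.gcd a b = 1
        by_contra hg
        obtain ⟨q, hq, hqg⟩ := Nat.exists_prime_and_dvd hg
        have hQ : Prime (q : ℤ) := Nat.prime_iff_prime_int.1 hq
        have hqa : (q : ℤ) ∣ a := (Int.natCast_dvd_natCast.2 hqg).trans (Int.gcd_dvd_left ..)
        have hqb : (q : ℤ) ∣ b := (Int.natCast_dvd_natCast.2 hqg).trans (Int.gcd_dvd_right ..)
        have hqj : (q : ℤ) ∣ j := by
          by_contra hqj
          have h5 : (q : ℤ) ∣ j * u := by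
            rw [← k1]; exact dvd_add (dvd_mul_of_dvd_right hqa _) (dvd_mul_of_dvd_right hqb _)
          have h6 : (q : ℤ) ∣ j * v := by
            rw [← k2]; exact dvd_sub (dvd_mul_of_dvd_right hqa _) (dvd_mul_of_dvd_right hqb _)
          exact hQ.not_dvd_one (dvd_one h2 ((hQ.dvd_or_dvd h5).resolve_left hqj)
            ((hQ.dvd_or_dvd h6).resolve_left hqj))
        have hq2 : (q : ℤ) ∣ 2 := by
          rcases hj' with rfl | rfl | rfl
          · exact absurd hqj hQ.not_dvd_one
          · exact hQ.dvd_of_dvd_pow (show (q : ℤ) ∣ 2 ^ 2 by norm_num; exact hqj)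
          · exact hQ.dvd_of_dvd_pow (show (q : ℤ) ∣ 2 ^ 3 by norm_num; exact hqj)
        have hq2' : q = 2 := (Nat.prime_dvd_prime_iff_eq hq Nat.prime_two).1 (by exact_mod_cast hq2)
        subst hq2'
        obtain ⟨i, rfl⟩ := hqj
        obtain ⟨y, rfl⟩ := even_of_sq_eq 27 y (i * p - 4 * x ^ 2) (by decide)
          (by push_cast at hxy; linarith)
        have hx := odd_of_gcd _ _ gxy
        obtain ⟨b, rfl⟩ := hqb
        have hv : Odd v := by
          by_contra hv
          rw [Int.not_odd_iff_even] at hv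
          obtain ⟨t, rfl⟩ := hv
          have : (p : ℤ) * m = 2 * (4 * u ^ 2 + 54 * t ^ 2) := by rw [← h1]; ring
          omega
        have hxv := hx.mul hv
        rw [← Int.not_even_iff_odd] at hxv
        apply hxv
        refine ⟨y * u - p * b, ?_⟩
        push_cast at hb
        linarith
      · simp only
        rw [k1, k2, Int.mul_ediv_cancel_left _ hj0, Int.mul_ediv_cancel_left _ hj0]
  rw [hunion, Set.ncard_union_eq hdisj (hfin.subset fun q h => h.1) (hfin.subset fun q h => h.1),
    ← hU12, ← hAU]
  ring
end

section
/- Let p be an odd prime such that the Diophantine equation 8x^2 + 27y^2 = jp has a primitive solution for some j ∈ {1, 4, 8}. Let m be an integer with m > 1, p ∤ m, and pm ≡ 11 (mod 24). Then the cardinality of the set {(u, v) ∈ ℤ² : 8u^2 + 27v^2 = pm and gcd(u, v) = 1} is divisible by 8. -/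
lemma aux_prime_coprime {q : ℤ} (hq : Prime q) (h3 : ¬ q ∣ 3) (h2 : ¬ q ∣ 2) {x y : ℤ}
    (hg : Int.gcd x y = 1) (h : q ∣ 8 * x ^ 2 + 27 * y ^ 2) : ¬ q ∣ x ∧ ¬ q ∣ y := by
  have both : ¬ (q ∣ x ∧ q ∣ y) := by
    rintro ⟨hx, hy⟩
    have := Int.dvd_coe_gcd hx hy
    rw [hg] at this
    exact hq.not_isUnit (isUnit_of_dvd_one (by simpa using this))
  constructor
  · intro hx
    apply both
    refine ⟨hx, ?_⟩
    have h1 : q ∣ 8 * x ^ 2 := (hx.pow two_ne_zero).mul_left 8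
    have h4 : q ∣ 3 ^ 3 * y ^ 2 := by
      have := (Int.dvd_add_right h1).1 h
      norm_num; exact this
    rcases hq.dvd_or_dvd h4 with h5 | h5
    · exact absurd (hq.dvd_of_dvd_pow h5) h3
    · exact hq.dvd_of_dvd_pow h5
  · intro hy
    apply both
    refine ⟨?_, hy⟩
    have h1 : q ∣ 27 * y ^ 2 := (hy.pow two_ne_zero).mul_left 27
    have h4 : q ∣ 2 ^ 3 * x ^ 2 := by
      have := (Int.dvd_add_left h1).1 h
      norm_num; exact this
    rcases hq.dvd_or_dvd h4 with h5 | h5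
    · exact absurd (hq.dvd_of_dvd_pow h5) h2
    · exact hq.dvd_of_dvd_pow h5

lemma aux_ab {p : ℤ} (hp : Prime p) (h3 : ¬ p ∣ 3) (h2 : ¬ p ∣ 2)
    (hsol : ∃ j ∈ ({1, 4, 8} : Set ℤ), ∃ x y : ℤ,
      8 * x ^ 2 + 27 * y ^ 2 = j * p ∧ Int.gcd x y = 1) :
    ∃ a b : ℤ, a ^ 2 + 216 * b ^ 2 = p ^ 2 ∧ ¬ p ∣ b := by
  obtain ⟨j, hj, x, y, h, hg⟩ := hsol
  obtain ⟨hx, hy⟩ := aux_prime_coprime hp h3 h2 hg (h ▸ Dvd.intro_left j rfl)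
  have hxy : ¬ p ∣ 2 * x * y := fun hd => by
    rcases hp.dvd_or_dvd hd with hd | hd
    · rcases hp.dvd_or_dvd hd with hd | hd
      · exact h2 hd
      · exact hx hd
    · exact hy hd
  have e2 : ∀ z : ℤ, 2 ∣ z ^ 2 → 2 ∣ z := fun z hz => Int.prime_two.dvd_of_dvd_pow hz
  simp only [Set.mem_insert_iff, Set.mem_singleton_iff] at hj
  rcases hj with rfl | rfl | rfl
  · refine ⟨8 * x ^ 2 - 27 * y ^ 2, 2 * x * y, ?_, hxy⟩
    have : p = 8 * x ^ 2 + 27 * y ^ 2 := by linarith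
    rw [this]; ring
  · obtain ⟨z, rfl⟩ := e2 y (by omega)
    refine ⟨2 * x ^ 2 - 27 * z ^ 2, x * z, ?_, fun hd => hxy ?_⟩
    · have : p = 2 * x ^ 2 + 27 * z ^ 2 := by linarith
      rw [this]; ring
    · exact (show 2 * x * (2 * z) = 4 * (x * z) by ring) ▸ hd.mul_left 4
  · obtain ⟨z, rfl⟩ := e2 y (by omega)
    obtain ⟨w, rfl⟩ := e2 z (by
      have : (2 * z) ^ 2 = 4 * z ^ 2 := by ring
      omega)
    refine ⟨x ^ 2 - 54 * w ^ 2, x * w, ?_, fun hd => hxy ?_⟩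
    · have : p = x ^ 2 + 54 * w ^ 2 := by linarith
      rw [this]; ring
    · exact (show 2 * x * (2 * (2 * w)) = 8 * (x * w) by ring) ▸ hd.mul_left 8

/-- The relation between two solutions: composition with `a + b √-216` divided by `p`. -/
def auxRel (p a b : ℤ) (s t : ℤ × ℤ) : Prop :=
  ∃ e d f : ℤ, e ^ 2 = 1 ∧ d ^ 2 = 1 ∧ f ^ 2 = 1 ∧
    s.1 * a + 27 * e * s.2 * b = d * p * t.1 ∧ s.2 * a - 8 * e * s.1 * b = f * p * t.2

lemma auxRel_symm {p a b : ℤ} (hp0 : p ≠ 0) (hab : a ^ 2 + 216 * b ^ 2 = p ^ 2) {s t : ℤ × ℤ}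
    (h : auxRel p a b s t) : auxRel p a b t s := by
  obtain ⟨e, d, f, he, hd, hf, h1, h2⟩ := h
  refine ⟨-e * d * f, d, f, ?_, hd, hf, ?_, ?_⟩
  · rw [mul_pow, mul_pow, neg_sq, he, hd, hf]; norm_num
  · apply mul_left_cancel₀ hp0
    linear_combination (-a * d) * h1 + 27 * e * d * b * h2 + (-a * p * t.1) * hd +
      d * s.1 * hab - 216 * d * s.1 * b ^ 2 * (1 - he)
  · apply mul_left_cancel₀ hp0
    linear_combination (-a * f) * h2 - 8 * e * f * b * h1 + (-a * p * t.2) * hf +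
      f * s.2 * hab - 216 * f * s.2 * b ^ 2 * (1 - he)

lemma aux_sq_one {d : ℤ} (h : d ^ 2 = 1) : d = 1 ∨ d = -1 :=
  sq_eq_sq_iff_eq_or_eq_neg.1 (h.trans (one_pow 2).symm)

lemma auxRel_cancel {p : ℤ} (hp : 0 < p) {d d' t t' : ℤ} (hd : d ^ 2 = 1) (hd' : d' ^ 2 = 1)
    (ht : 0 < t) (ht' : 0 < t') (h : d * p * t = d' * p * t') : t = t' := by
  have h1 : d * t = d' * t' := mul_left_cancel₀ hp.ne' (by linear_combination h)
  rcases aux_sq_one hd with rfl | rfl <;>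
    rcases aux_sq_one hd' with rfl | rfl <;> linarith

lemma auxRel_unique {p a b : ℤ} (hp : Prime p) (hp0 : 0 < p) (h2 : ¬ p ∣ 2) (ha : ¬ p ∣ a)
    {s t t' : ℤ × ℤ} (hs : ¬ p ∣ s.1)
    (ht : 0 < t.1 ∧ 0 < t.2) (ht' : 0 < t'.1 ∧ 0 < t'.2)
    (h : auxRel p a b s t) (h' : auxRel p a b s t') : t = t' := by
  obtain ⟨e, d, f, he, hd, hf, h1, h2'⟩ := h
  obtain ⟨e', d', f', he', hd', hf', h1', h2''⟩ := h'
  have hee : e = e' := by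
    rcases sq_eq_sq_iff_eq_or_eq_neg.1 (he.trans he'.symm) with h | h
    · exact h
    · exfalso
      have : p ∣ 2 * s.1 * a := ⟨d * t.1 + d' * t'.1, by
        subst h; linear_combination h1 + h1'⟩
      rcases hp.dvd_or_dvd this with h | h
      · rcases hp.dvd_or_dvd h with h | h
        · exact h2 h
        · exact hs h
      · exact ha h
  subst hee
  exact Prod.ext (auxRel_cancel hp0 hd hd' ht.1 ht'.1 (h1.symm.trans h1'))
    (auxRel_cancel hp0 hf hf' ht.2 ht'.2 (h2'.symm.trans h2''))

lemma auxRel_irrefl {p m a b : ℤ} (hp0 : 0 < p) (hm0 : 0 < m) (hb : b ≠ 0)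
    {q : ℤ} (hq : Prime q) (h3 : ¬ q ∣ 3) (h2 : ¬ q ∣ 2) (hqm : q ∣ m) {s : ℤ × ℤ}
    (hs : 8 * s.1 ^ 2 + 27 * s.2 ^ 2 = p * m) (hg : Int.gcd s.1 s.2 = 1) :
    ¬ auxRel p a b s s := by
  rintro ⟨e, d, f, he, hd, hf, h1, h4⟩
  have he0 : e ≠ 0 := by rintro rfl; norm_num at he
  have key : e * b * m = (d - f) * s.1 * s.2 := by
    apply mul_left_cancel₀ hp0.ne'
    linear_combination s.2 * h1 - s.1 * h4 - e * b * hs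
  rcases sq_eq_sq_iff_eq_or_eq_neg.1 (hd.trans hf.symm) with h | h
  · subst h
    have : e * b * m ≠ 0 := mul_ne_zero (mul_ne_zero he0 hb) hm0.ne'
    exact this (by rw [key]; ring)
  · subst h
    obtain ⟨hx, hy⟩ := aux_prime_coprime hq h3 h2 hg (hs ▸ hqm.mul_left p)
    have hd0 : q ∣ (-f - f) * s.1 * s.2 := key ▸ hqm.mul_left _
    rcases hq.dvd_or_dvd hd0 with h | h
    · rcases hq.dvd_or_dvd h with h | h
      · apply h2
        have : (2 : ℤ) = (-f - f) * (-f) := by linear_combination -2 * hf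
        rw [this]; exact h.mul_right _
      · exact hx h
    · exact hy h

lemma auxRel_exists {p m a b : ℤ} (hp : Prime p) (hp0 : 0 < p) (h3 : ¬ p ∣ 3)
    (hpm : ¬ p ∣ m) (hm6 : ∀ x y : ℤ, 8 * x ^ 2 + 27 * y ^ 2 = p * m → x ≠ 0 ∧ y ≠ 0)
    (hab : a ^ 2 + 216 * b ^ 2 = p ^ 2) {s : ℤ × ℤ}
    (hs : 8 * s.1 ^ 2 + 27 * s.2 ^ 2 = p * m) (hg : Int.gcd s.1 s.2 = 1) :
    ∃ t : ℤ × ℤ, 8 * t.1 ^ 2 + 27 * t.2 ^ 2 = p * m ∧ Int.gcd t.1 t.2 = 1 ∧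
      (0 < t.1 ∧ 0 < t.2) ∧ auxRel p a b s t := by
  have h0 : ∃ e : ℤ, e ^ 2 = 1 ∧ p ∣ s.1 * a + 27 * e * s.2 * b := by
    have : p ∣ (s.1 * a + 27 * 1 * s.2 * b) * (s.1 * a + 27 * (-1) * s.2 * b) :=
      ⟨s.1 ^ 2 * p - 27 * b ^ 2 * m, by
        linear_combination s.1 ^ 2 * hab - 27 * b ^ 2 * hs⟩
    rcases hp.dvd_or_dvd this with h | h
    · exact ⟨1, by norm_num, h⟩
    · exact ⟨-1, by norm_num, h⟩
  obtain ⟨e, he, x, hx⟩ := h0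
  have h1 : p ∣ 3 ^ 3 * (s.2 * a - 8 * e * s.1 * b) ^ 2 :=
    ⟨p ^ 2 * m - 8 * p * x ^ 2, by
      linear_combination p ^ 2 * hs + (8 * s.1 ^ 2 + 27 * s.2 ^ 2) * hab
        - 8 * (s.1 * a + 27 * e * s.2 * b + p * x) * hx
        + 216 * b ^ 2 * (8 * s.1 ^ 2 + 27 * s.2 ^ 2) * he⟩
  have h2 : p ∣ s.2 * a - 8 * e * s.1 * b := by
    rcases hp.dvd_or_dvd h1 with h | h
    · exact absurd (hp.dvd_of_dvd_pow h) h3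
    · exact hp.dvd_of_dvd_pow h
  obtain ⟨y, hy⟩ := h2
  have hxy : 8 * x ^ 2 + 27 * y ^ 2 = p * m := by
    apply mul_left_cancel₀ (pow_ne_zero 2 hp0.ne')
    linear_combination p ^ 2 * hs + (8 * s.1 ^ 2 + 27 * s.2 ^ 2) * hab
        - 8 * (s.1 * a + 27 * e * s.2 * b + p * x) * hx
        - 27 * (s.2 * a - 8 * e * s.1 * b + p * y) * hy
        + 216 * b ^ 2 * (8 * s.1 ^ 2 + 27 * s.2 ^ 2) * he
  obtain ⟨hx0, hy0⟩ := hm6 x y hxy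
  have hb1 : a * x - 27 * e * b * y = p * s.1 := by
    apply mul_left_cancel₀ hp0.ne'
    linear_combination -a * hx + 27 * e * b * hy + s.1 * hab + 216 * b ^ 2 * s.1 * he
  have hb2 : a * y + 8 * e * b * x = p * s.2 := by
    apply mul_left_cancel₀ hp0.ne'
    linear_combination -a * hy - 8 * e * b * hx + s.2 * hab + 216 * b ^ 2 * s.2 * he
  have hgcd : Int.gcd x y = 1 := by
    by_contra hne
    obtain ⟨r, hr, hrd⟩ := Nat.exists_prime_and_dvd hne
    have hr' : Prime (r : ℤ) := Nat.prime_iff_prime_int.1 hr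
    have hrx : (r : ℤ) ∣ x := (Int.natCast_dvd_natCast.2 hrd).trans (Int.gcd_dvd_left _ _)
    have hry : (r : ℤ) ∣ y := (Int.natCast_dvd_natCast.2 hrd).trans (Int.gcd_dvd_right _ _)
    have hr1 : (r : ℤ) ∣ p * s.1 := hb1 ▸ dvd_sub (hrx.mul_left _) (hry.mul_left _)
    have hr2 : (r : ℤ) ∣ p * s.2 := hb2 ▸ dvd_add (hry.mul_left _) (hrx.mul_left _)
    have hrp : (r : ℤ) ∣ p := by
      by_contra hn
      have c1 := (hr'.dvd_or_dvd hr1).resolve_left hn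
      have c2 := (hr'.dvd_or_dvd hr2).resolve_left hn
      have := Int.dvd_coe_gcd c1 c2
      rw [hg] at this
      exact hr'.not_isUnit (isUnit_of_dvd_one (by simpa using this))
    have hpr : p ∣ (r : ℤ) := (hr'.associated_of_dvd hp hrp).symm.dvd
    obtain ⟨x', rfl⟩ := hpr.trans hrx
    obtain ⟨y', rfl⟩ := hpr.trans hry
    apply hpm
    refine ⟨8 * x' ^ 2 + 27 * y' ^ 2, ?_⟩
    apply mul_left_cancel₀ hp0.ne'
    linear_combination -hxy
  have hsg : ∀ z : ℤ, z ≠ 0 → ∃ d : ℤ, d ^ 2 = 1 ∧ z = d * |z| := by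
    intro z hz
    rcases abs_choice z with h | h
    · exact ⟨1, by norm_num, by rw [h]; ring⟩
    · exact ⟨-1, by norm_num, by rw [h]; ring⟩
  obtain ⟨d, hd, hdx⟩ := hsg x hx0
  obtain ⟨f, hf, hfy⟩ := hsg y hy0
  refine ⟨(|x|, |y|), by simpa using hxy, by simpa [Int.gcd, Int.natAbs_abs] using hgcd,
    ⟨by simpa using hx0, by simpa using hy0⟩, e, d, f, he, hd, hf, ?_, ?_⟩
  · show _ = d * p * |x|
    linear_combination hx + p * hdx
  · show _ = f * p * |y|
    linear_combination hy + p * hfy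

lemma aux_even_card (P : Finset (ℤ × ℤ)) (R : ℤ × ℤ → ℤ × ℤ → Prop)
    (hex : ∀ s ∈ P, ∃ t ∈ P, R s t) (hsymm : ∀ s t, R s t → R t s)
    (huniq : ∀ s ∈ P, ∀ t ∈ P, ∀ t' ∈ P, R s t → R s t' → t = t')
    (hirr : ∀ s ∈ P, ¬ R s s) : 2 ∣ P.card := by
  choose g hgP hgR using hex
  have h : ∑ s ∈ P, (1 : ZMod 2) = 0 :=
    Finset.sum_involution (fun s hs => g s hs) (fun _ _ => by decide)
      (fun s hs _ heq => hirr s hs (by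
        have := hgR s hs
        rwa [heq] at this))
      (fun s hs => hgP s hs)
      (fun s hs => huniq _ (hgP s hs) _ (hgP _ _) _ hs (hgR _ _) (hsymm _ _ (hgR s hs)))
  rw [← ZMod.natCast_eq_zero_iff]
  simpa using h

lemma aux_card_four (S : Finset (ℤ × ℤ)) (h0 : ∀ s ∈ S, s.1 ≠ 0 ∧ s.2 ≠ 0)
    (h1 : ∀ s ∈ S, (-s.1, s.2) ∈ S) (h2 : ∀ s ∈ S, (s.1, -s.2) ∈ S) :
    S.card = (S.filter (fun s => 0 < s.1 ∧ 0 < s.2)).card * 4 := by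
  have habs : ∀ s ∈ S, (|s.1|, |s.2|) ∈ S := by
    intro s hs
    rcases abs_choice s.1 with h | h <;> rcases abs_choice s.2 with h' | h' <;> rw [h, h']
    · exact hs
    · exact h2 _ hs
    · exact h1 _ hs
    · exact h2 _ (h1 _ hs)
  rw [Finset.card_eq_sum_card_fiberwise (f := fun s : ℤ × ℤ => (|s.1|, |s.2|))
    (t := S.filter (fun s => 0 < s.1 ∧ 0 < s.2))]
  · apply Finset.sum_const_nat
    rintro ⟨u, v⟩ ht
    obtain ⟨hS, hu, hv⟩ := Finset.mem_filter.1 ht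
    simp only at hu hv
    have : S.filter (fun s : ℤ × ℤ => (|s.1|, |s.2|) = (u, v)) =
        {(u, v), (-u, v), (u, -v), (-u, -v)} := by
      ext ⟨x, y⟩
      simp only [Finset.mem_filter, Prod.mk.injEq, Finset.mem_insert, Finset.mem_singleton]
      constructor
      · rintro ⟨_, hx, hy⟩
        rw [abs_eq hu.le] at hx
        rw [abs_eq hv.le] at hy
        tauto
      · rintro (⟨rfl, rfl⟩ | ⟨rfl, rfl⟩ | ⟨rfl, rfl⟩ | ⟨rfl, rfl⟩)
        · exact ⟨hS, abs_of_pos hu, abs_of_pos hv⟩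
        · exact ⟨h1 _ hS, by rw [abs_neg, abs_of_pos hu], abs_of_pos hv⟩
        · exact ⟨h2 _ hS, abs_of_pos hu, by rw [abs_neg, abs_of_pos hv]⟩
        · exact ⟨h2 _ (h1 _ hS), by rw [abs_neg, abs_of_pos hu], by rw [abs_neg, abs_of_pos hv]⟩
    rw [this, Finset.card_insert_of_notMem, Finset.card_insert_of_notMem,
      Finset.card_insert_of_notMem, Finset.card_singleton] <;>
    · simp only [Prod.mk.injEq, Finset.mem_insert, Finset.mem_singleton]
      omega
  · intro s hs
    have hs' : s ∈ S := hs
    simp only [Finset.coe_filter, Set.mem_ofPred_eq]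
    exact ⟨habs s hs', abs_pos.2 (h0 s hs').1, abs_pos.2 (h0 s hs').2⟩

theorem stmt_14 (p : ℕ) (hp : p.Prime) (hodd : Odd p)
    (hsol : ∃ j ∈ ({1, 4, 8} : Set ℤ), ∃ x y : ℤ,
      8 * x ^ 2 + 27 * y ^ 2 = j * p ∧ Int.gcd x y = 1)
    (m : ℕ) (hm : 1 < m) (hpm : ¬ p ∣ m) (hmod : (p * m) % 24 = 11) :
    8 ∣ {q : ℤ × ℤ | 8 * q.1 ^ 2 + 27 * q.2 ^ 2 = (p : ℤ) * m ∧
      Int.gcd q.1 q.2 = 1}.ncard := by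
  have hp24 : ∀ r : ℕ, r.Prime → r ∣ p * m → ¬ (r : ℤ) ∣ 3 ∧ ¬ (r : ℤ) ∣ 2 := by
    intro r hr hd
    constructor
    · intro h
      have h' : r ∣ 3 := by exact_mod_cast h
      rw [(Nat.prime_dvd_prime_iff_eq hr Nat.prime_three).1 h'] at hd
      omega
    · intro h
      have h' : r ∣ 2 := by exact_mod_cast h
      rw [(Nat.prime_dvd_prime_iff_eq hr Nat.prime_two).1 h'] at hd
      omega
  have hpp : Prime (p : ℤ) := Nat.prime_iff_prime_int.1 hp
  have hp0 : (0 : ℤ) < p := by exact_mod_cast hp.pos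
  have hm0 : (0 : ℤ) < m := by exact_mod_cast (by omega : 0 < m)
  have hpm' : ¬ (p : ℤ) ∣ m := by exact_mod_cast hpm
  obtain ⟨hp3, hp2⟩ := hp24 p hp (Dvd.intro _ rfl)
  obtain ⟨a, b, hab, hb⟩ := aux_ab hpp hp3 hp2 hsol
  have hb0 : b ≠ 0 := by rintro rfl; exact hb (dvd_zero _)
  have ha : ¬ (p : ℤ) ∣ a := by
    rintro ⟨c, rfl⟩
    have h : (p : ℤ) ∣ 2 ^ 3 * 3 ^ 3 * b ^ 2 := ⟨p - p * c ^ 2, by linear_combination hab⟩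
    rcases hpp.dvd_or_dvd h with h | h
    · rcases hpp.dvd_or_dvd h with h | h
      · exact hp2 (hpp.dvd_of_dvd_pow h)
      · exact hp3 (hpp.dvd_of_dvd_pow h)
    · exact hb (hpp.dvd_of_dvd_pow h)
  obtain ⟨q, hq, hqm⟩ := Nat.exists_prime_and_dvd (show m ≠ 1 by omega)
  obtain ⟨hq3, hq2⟩ := hp24 q hq (hqm.mul_left p)
  have hqq : Prime (q : ℤ) := Nat.prime_iff_prime_int.1 hq
  have hqm' : (q : ℤ) ∣ m := by exact_mod_cast hqm
  have hmod' : ((p : ℤ) * m) % 24 = 11 := by exact_mod_cast hmod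
  have hm6 : ∀ x y : ℤ, 8 * x ^ 2 + 27 * y ^ 2 = (p : ℤ) * m → x ≠ 0 ∧ y ≠ 0 := by
    intro x y h
    constructor
    · rintro rfl
      omega
    · rintro rfl
      omega
  set A : Set (ℤ × ℤ) := {q : ℤ × ℤ | 8 * q.1 ^ 2 + 27 * q.2 ^ 2 = (p : ℤ) * m ∧
      Int.gcd q.1 q.2 = 1} with hA
  have hfin : A.Finite := by
    apply (Set.finite_Icc ((-(p * m : ℤ), -(p * m : ℤ))) ((p * m : ℤ), (p * m : ℤ))).subset
    rintro ⟨x, y⟩ ⟨h, _⟩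
    simp only at h
    have hx : x ^ 2 ≤ (p : ℤ) * m := by nlinarith [sq_nonneg x, sq_nonneg y]
    have hy : y ^ 2 ≤ (p : ℤ) * m := by nlinarith [sq_nonneg x, sq_nonneg y]
    have hx1 := Int.le_self_sq x
    have hx2 := Int.le_self_sq (-x)
    have hy1 := Int.le_self_sq y
    have hy2 := Int.le_self_sq (-y)
    rw [neg_sq] at hx2 hy2
    refine ⟨⟨?_, ?_⟩, ⟨?_, ?_⟩⟩ <;> simp only <;> linarith
  rw [Set.ncard_eq_toFinset_card A hfin]
  have hmem : ∀ s, s ∈ hfin.toFinset ↔ (8 * s.1 ^ 2 + 27 * s.2 ^ 2 = (p : ℤ) * m ∧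
      Int.gcd s.1 s.2 = 1) := fun s => by rw [Set.Finite.mem_toFinset]; rfl
  rw [aux_card_four]
  · have : 2 ∣ (hfin.toFinset.filter (fun s : ℤ × ℤ => 0 < s.1 ∧ 0 < s.2)).card := by
      apply aux_even_card _ (auxRel p a b)
      · intro s hs
        obtain ⟨hs1, _⟩ := Finset.mem_filter.1 hs
        obtain ⟨hs2, hs3⟩ := (hmem s).1 hs1
        obtain ⟨t, ht1, ht2, ht3, ht4⟩ := auxRel_exists hpp hp0 hp3 hpm' hm6 hab hs2 hs3
        exact ⟨t, Finset.mem_filter.2 ⟨(hmem t).2 ⟨ht1, ht2⟩, ht3⟩, ht4⟩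
      · intro s t
        exact auxRel_symm hp0.ne' hab
      · intro s hs t ht t' ht'
        obtain ⟨hs2, hs3⟩ := (hmem s).1 (Finset.mem_filter.1 hs).1
        exact auxRel_unique hpp hp0 hp2 ha
          (aux_prime_coprime hpp hp3 hp2 hs3 (hs2 ▸ Dvd.intro _ rfl)).1
          (Finset.mem_filter.1 ht).2 (Finset.mem_filter.1 ht').2
      · intro s hs
        obtain ⟨hs2, hs3⟩ := (hmem s).1 (Finset.mem_filter.1 hs).1
        exact auxRel_irrefl hp0 hm0 hb0 hqq hq3 hq2 hqm' hs2 hs3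
    omega
  · intro s hs
    exact hm6 _ _ ((hmem s).1 hs).1
  · intro s hs
    rw [hmem] at hs ⊢
    simpa using hs
  · intro s hs
    rw [hmem] at hs ⊢
    simpa using hs
end

section
/- Let p be a prime with p ≡ 11 (mod 24) such that the Diophantine equation 8x^2 + 27y^2 = jp has a primitive solution for some j ∈ {1, 4, 8}. Then the set {(u, v) ∈ ℤ² : 8u^2 + 27v^2 = p and gcd(u, v) = 1} has exactly 4 elements. -/
lemma aux_unique (p : ℕ) (hp : p.Prime) (a b c d : ℤ)
    (h1 : 8 * a ^ 2 + 27 * b ^ 2 = (p : ℤ)) (h2 : 8 * c ^ 2 + 27 * d ^ 2 = (p : ℤ)) :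
    (c = a ∨ c = -a) ∧ (d = b ∨ d = -b) := by
  have hpp : Prime (p : ℤ) := Nat.prime_iff_prime_int.mp hp
  have hpos : (0 : ℤ) < p := by exact_mod_cast hp.pos
  have key : 8 * ((a * d - b * c) * (a * d + b * c)) = (p : ℤ) * (d ^ 2 - b ^ 2) := by
    linear_combination d ^ 2 * h1 - b ^ 2 * h2
  have small : ∀ m n : ℤ, n ^ 2 + 216 * m ^ 2 = (p : ℤ) ^ 2 → (p : ℤ) ∣ m → m = 0 := by
    rintro m n h ⟨k, rfl⟩
    have hk : k = 0 := by
      by_contra hk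
      have : 1 ≤ k ^ 2 := by have : 0 < k ^ 2 := by positivity
                             omega
      nlinarith [sq_nonneg n, mul_pos hpos hpos, mul_le_mul_of_nonneg_left this (mul_pos hpos hpos).le]
    simp [hk]
  have e1 : (8 * a * c + 27 * b * d) ^ 2 + 216 * (a * d - b * c) ^ 2 = (p : ℤ) ^ 2 := by
    linear_combination (8 * c ^ 2 + 27 * d ^ 2) * h1 + p * h2
  have e2 : (8 * a * c - 27 * b * d) ^ 2 + 216 * (a * d + b * c) ^ 2 = (p : ℤ) ^ 2 := by
    linear_combination (8 * c ^ 2 + 27 * d ^ 2) * h1 + p * h2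
  have hdvd : (p : ℤ) ∣ 8 * ((a * d - b * c) * (a * d + b * c)) := ⟨_, key⟩
  have hprod : (a * d - b * c) * (a * d + b * c) = 0 ∨ (p : ℤ) ∣ 8 := by
    rcases hpp.dvd_or_dvd hdvd with h | h
    · exact Or.inr h
    · rcases hpp.dvd_or_dvd h with h | h
      · left; rw [small _ _ e1 h]; ring
      · left; rw [small _ _ e2 h]; ring
  have hdb : d ^ 2 = b ^ 2 := by
    rcases hprod with h | h
    · rw [h] at key
      have : (d ^ 2 - b ^ 2) = 0 := by
        rcases mul_eq_zero.mp (show (p : ℤ) * (d ^ 2 - b ^ 2) = 0 by linarith) with h | h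
        · omega
        · exact h
      linarith
    · -- then p divides 8, so p ≤ 8 and both b and d vanish
      have hle := Int.le_of_dvd (by norm_num) h
      have hb : b ^ 2 = 0 := by nlinarith [sq_nonneg a, sq_nonneg b]
      have hd : d ^ 2 = 0 := by nlinarith [sq_nonneg c, sq_nonneg d]
      rw [hb, hd]
  have hca : c ^ 2 = a ^ 2 := by linarith
  exact ⟨sq_eq_sq_iff_eq_or_eq_neg.mp hca, sq_eq_sq_iff_eq_or_eq_neg.mp hdb⟩

theorem stmt_15 (p : ℕ) (hp : p.Prime) (hp24 : p % 24 = 11)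
    (hsol : ∃ j ∈ ({1, 4, 8} : Set ℤ), ∃ x y : ℤ,
      8 * x ^ 2 + 27 * y ^ 2 = j * p ∧ Int.gcd x y = 1) :
    {q : ℤ × ℤ | 8 * q.1 ^ 2 + 27 * q.2 ^ 2 = (p : ℤ) ∧ Int.gcd q.1 q.2 = 1}.ncard = 4 := by
  have hex : ∃ a b : ℤ, 8 * a ^ 2 + 27 * b ^ 2 = (p : ℤ) ∧ Int.gcd a b = 1 := by
    obtain ⟨j, hj, x, y, h, hg⟩ := hsol
    simp only [Set.mem_insert_iff, Set.mem_singleton_iff] at hj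
    rcases hj with rfl | rfl | rfl
    · exact ⟨x, y, by linarith, hg⟩
    · exfalso
      have hy : 2 ∣ y := by
        have : (2 : ℤ) ∣ y ^ 2 := by omega
        exact Int.prime_two.dvd_of_dvd_pow this
      obtain ⟨z, rfl⟩ := hy
      have hx : 2 ∣ x := by
        have hz : z ^ 2 % 8 = 0 ∨ z ^ 2 % 8 = 1 ∨ z ^ 2 % 8 = 4 := by
          have : z % 8 = 0 ∨ z % 8 = 1 ∨ z % 8 = 2 ∨ z % 8 = 3 ∨ z % 8 = 4 ∨ z % 8 = 5 ∨
            z % 8 = 6 ∨ z % 8 = 7 := by omega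
          rcases this with h | h | h | h | h | h | h | h <;> simp [pow_two, Int.mul_emod, h]
        have h' : 2 * x ^ 2 + 27 * z ^ 2 = (p : ℤ) := by linarith
        have : (2 : ℤ) ∣ x ^ 2 := by omega
        exact Int.prime_two.dvd_of_dvd_pow this
      have := Int.dvd_coe_gcd hx (Dvd.intro z rfl)
      rw [hg] at this
      norm_num at this
    · exfalso
      have hx : x ^ 2 % 3 = 0 ∨ x ^ 2 % 3 = 1 := by
        have : x % 3 = 0 ∨ x % 3 = 1 ∨ x % 3 = 2 := by omega
        rcases this with h | h | h <;> simp [pow_two, Int.mul_emod, h]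
      omega
  obtain ⟨a, b, h, hg⟩ := hex
  have ha : a ≠ 0 := by rintro rfl; omega
  have hb : b ≠ 0 := by rintro rfl; omega
  have hset : {q : ℤ × ℤ | 8 * q.1 ^ 2 + 27 * q.2 ^ 2 = (p : ℤ) ∧ Int.gcd q.1 q.2 = 1} =
      (({(a, b), (a, -b), (-a, b), (-a, -b)} : Finset (ℤ × ℤ)) : Set (ℤ × ℤ)) := by
    ext ⟨c, d⟩
    simp only [Set.mem_setOf_eq, Finset.coe_insert, Finset.coe_singleton, Set.mem_insert_iff,
      Set.mem_singleton_iff, Prod.mk.injEq]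
    constructor
    · rintro ⟨h2, -⟩
      have := aux_unique p hp a b c d h h2
      tauto
    · rintro (⟨rfl, rfl⟩ | ⟨rfl, rfl⟩ | ⟨rfl, rfl⟩ | ⟨rfl, rfl⟩) <;> simp [h, hg]
  rw [hset, Set.ncard_coe_finset]
  have ha' : a ≠ -a := by omega
  have hb' : b ≠ -b := by omega
  rw [Finset.card_insert_of_notMem, Finset.card_insert_of_notMem, Finset.card_insert_of_notMem,
    Finset.card_singleton] <;> simp [Prod.ext_iff] <;> omega
end

section
/- For every odd prime p, the following are equivalent: (i) there exists j ∈ {1, 4, 8} such that the Diophantine equation 8x^2 + 27y^2 = jp has a primitive solution; (ii) there exists j ∈ {1, 4, 8} such that the Diophantine equation x^2 + 216y^2 = jp has a primitive solution. In other words, the set 𝒬 of odd primes satisfying (i) equals the set 𝒫 of primes satisfying (ii). -/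
theorem aux_two {x y : ℤ} (hy : y % 2 = 1) (h : IsCoprime x y) : IsCoprime (2 * x) y := by
  refine IsCoprime.mul_left ⟨-(y / 2), 1, ?_⟩ h
  omega

theorem aux_odd_sq {x : ℤ} (h : x % 2 = 0) : ∃ z, x = 2 * z := ⟨x / 2, by omega⟩

theorem aux_even {x m : ℤ} (h : x ^ 2 = 2 * m) : ∃ z, x = 2 * z := by
  have : (2 : ℤ) ∣ x := Int.prime_two.dvd_of_dvd_pow (n := 2) ⟨m, h⟩
  exact this

theorem aux_odd {x m : ℤ} (h : (x * m) % 2 = 1) : x % 2 = 1 := by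
  rcases Int.emod_two_eq_zero_or_one x with h0 | h0
  · rw [Int.mul_emod, h0] at h
    simp at h
  · exact h0

theorem stmt_16 (p : ℕ) (hp : p.Prime) (hodd : Odd p) :
    (∃ j ∈ ({1, 4, 8} : Set ℤ), ∃ x y : ℤ,
      8 * x ^ 2 + 27 * y ^ 2 = j * p ∧ Int.gcd x y = 1) ↔
    (∃ j ∈ ({1, 4, 8} : Set ℤ), ∃ x y : ℤ,
      x ^ 2 + 216 * y ^ 2 = j * p ∧ Int.gcd x y = 1) := by
  have hq : (p : ℤ) % 2 = 1 := by
    obtain ⟨k, hk⟩ := hodd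
    omega
  generalize (p : ℤ) = q at hq
  simp only [← Int.isCoprime_iff_gcd_eq_one, Set.mem_insert_iff, Set.mem_singleton_iff]
  constructor
  · rintro ⟨j, rfl | rfl | rfl, x, y, h, hc⟩
    · have hy : y % 2 = 1 := aux_odd (m := y) (by rw [← pow_two]; omega)
      refine ⟨8, by simp, 2 * (2 * (2 * x)), y, by linear_combination 8 * h, ?_⟩
      exact aux_two hy (aux_two hy (aux_two hy hc))
    · obtain ⟨z, rfl⟩ := aux_even (x := y) (m := 2 * q - 4 * x ^ 2 - 13 * y ^ 2) (by linarith)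
      have h2 : 2 * x ^ 2 + 27 * z ^ 2 = q := by linarith
      have hz : z % 2 = 1 := aux_odd (m := z) (by rw [← pow_two]; omega)
      refine ⟨8, by simp, 2 * (2 * x), z, by linear_combination 8 * h2, ?_⟩
      exact aux_two hz (aux_two hz hc.of_mul_right_right)
    · obtain ⟨z, rfl⟩ := aux_even (x := y) (m := 4 * q - 4 * x ^ 2 - 13 * y ^ 2) (by linarith)
      obtain ⟨w, rfl⟩ := aux_even (x := z) (m := q - x ^ 2 - 13 * z ^ 2) (by linarith)
      have h2 : x ^ 2 + 54 * w ^ 2 = q := by linarith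
      have hc' := hc.of_mul_right_right.of_mul_right_right
      rcases Int.emod_two_eq_zero_or_one w with hw | hw
      · obtain ⟨v, rfl⟩ := aux_odd_sq hw
        exact ⟨1, by simp, x, v, by linear_combination h2, hc'.of_mul_right_right⟩
      · exact ⟨4, by simp, 2 * x, w, by linear_combination 4 * h2, aux_two hw hc'⟩
  · rintro ⟨j, rfl | rfl | rfl, x, y, h, hc⟩
    · have hx : x % 2 = 1 := aux_odd (m := x) (by rw [← pow_two]; omega)
      refine ⟨8, by simp, x, 2 * (2 * (2 * y)), by linear_combination 8 * h, ?_⟩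
      exact (aux_two hx (aux_two hx (aux_two hx hc.symm))).symm
    · obtain ⟨u, rfl⟩ := aux_even (x := x) (m := 2 * q - 108 * y ^ 2) (by linarith)
      have h2 : u ^ 2 + 54 * y ^ 2 = q := by linarith
      have hu : u % 2 = 1 := aux_odd (m := u) (by rw [← pow_two]; omega)
      refine ⟨8, by simp, u, 2 * (2 * y), by linear_combination 8 * h2, ?_⟩
      exact (aux_two hu (aux_two hu hc.of_mul_left_right.symm)).symm
    · obtain ⟨z, rfl⟩ := aux_even (x := x) (m := 4 * q - 108 * y ^ 2) (by linarith)
      obtain ⟨u, rfl⟩ := aux_even (x := z) (m := q - 27 * y ^ 2) (by linarith)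
      have h2 : 2 * u ^ 2 + 27 * y ^ 2 = q := by linarith
      have hc' := hc.of_mul_left_right.of_mul_left_right
      rcases Int.emod_two_eq_zero_or_one u with hu | hu
      · obtain ⟨v, rfl⟩ := aux_odd_sq hu
        exact ⟨1, by simp, v, y, by linear_combination h2, hc'.of_mul_left_right⟩
      · exact ⟨4, by simp, u, 2 * y, by linear_combination 4 * h2, (aux_two hu hc'.symm).symm⟩
end
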